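/- Let n ≥ 5 and let P be a non-flat regular n-polytope with strictly more than 4(n+1)! flags (so P is at least the fourth smallest non-flat regular n-polytope by flag count). Then P has at least (16/3)(n+1)! flags. -/

import Mathlib

open scoped Classical

/-- An abstract polytope of rank `n`: a partially ordered set with a unique minimal
element (of rank `-1`) and a unique maximal element (of rank `n`), all of whose
maximal chains (flags) have exactly `n + 2` elements, equipped with the induced
rank function, satisfying the diamond condition and strong connectivity. -/
structure AbstractPolytope (n : ℕ) where
  Face : Type
  [instPartialOrder : PartialOrder Face]
  rank : Face → ℤ
  bot : Face
  top : Face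
  bot_le : ∀ F : Face, bot ≤ F
  le_top : ∀ F : Face, F ≤ top
  rank_bot : rank bot = -1
  rank_top : rank top = n
  rank_strictMono : ∀ F G : Face, F < G → rank F < rank G
  flag_card : ∀ Φ : Flag Face, Nat.card Φ = n + 2
  flag_ranks : ∀ (Φ : Flag Face) (j : ℤ), -1 ≤ j → j ≤ (n : ℤ) →
    ∃ F ∈ Φ, rank F = j
  diamond : ∀ F G : Face, F < G → rank G = rank F + 2 →
    Nat.card {H : Face // F < H ∧ H < G} = 2
  strongly_connected : ∀ F G : Face, F < G → rank F + 3 ≤ rank G →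
    ∀ H H' : Face, F < H → H < G → F < H' → H' < G →
    Relation.ReflTransGen
      (fun A B : Face => F < A ∧ A < G ∧ F < B ∧ B < G ∧ (A ≤ B ∨ B ≤ A)) H H'

attribute [instance] AbstractPolytope.instPartialOrder

namespace AbstractPolytope

variable {n : ℕ} (P : AbstractPolytope n)

/-- The number of flags of `P`. -/
noncomputable def numFlags : ℕ := Nat.card (Flag P.Face)

/-- A vertex is a face of rank `0`. -/
def IsVertex (F : P.Face) : Prop := P.rank F = 0

/-- A facet is a face of rank `n - 1`. -/
def IsFacet (F : P.Face) : Prop := P.rank F = (n : ℤ) - 1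

/-- The number of vertices of `P`. -/
noncomputable def numVertices : ℕ := Nat.card {F : P.Face // P.IsVertex F}

/-- The number of facets of `P`. -/
noncomputable def numFacets : ℕ := Nat.card {F : P.Face // P.IsFacet F}

/-- Two faces are incident when they are comparable. -/
def Incident (F G : P.Face) : Prop := F ≤ G ∨ G ≤ F

/-- `P` is `(k, m)`-flat when every face of rank `k` is incident with every face of
rank `m`. -/
def IsKMFlat (k m : ℤ) : Prop :=
  ∀ F G : P.Face, P.rank F = k → P.rank G = m → P.Incident F G

/-- `P` is flat when every vertex is incident with every facet. -/
def IsFlat : Prop := P.IsKMFlat 0 ((n : ℤ) - 1)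

/-- Two flags are adjacent when they differ in exactly one element. -/
def AdjacentFlags (Φ Ψ : Flag P.Face) : Prop :=
  Φ ≠ Ψ ∧ ((Φ : Set P.Face) \ (Ψ : Set P.Face)).ncard = 1 ∧
    ((Ψ : Set P.Face) \ (Φ : Set P.Face)).ncard = 1

/-- Two flags lie in the same orbit of the automorphism group `Γ(P)` (the group of
order automorphisms of `P`). -/
def SameOrbit (Φ Ψ : Flag P.Face) : Prop :=
  ∃ f : P.Face ≃o P.Face, f '' (Φ : Set P.Face) = (Ψ : Set P.Face)

/-- `P` is regular when `Γ(P)` is transitive on flags. -/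
def IsRegular : Prop := ∀ Φ Ψ : Flag P.Face, P.SameOrbit Φ Ψ

/-- `P` is chiral when its flags fall into exactly two orbits under `Γ(P)` and
adjacent flags always lie in different orbits. -/
def IsChiral : Prop :=
  (∃ Φ₁ Φ₂ : Flag P.Face, ¬ P.SameOrbit Φ₁ Φ₂ ∧
      ∀ Φ : Flag P.Face, P.SameOrbit Φ Φ₁ ∨ P.SameOrbit Φ Φ₂) ∧
  ∀ Φ Ψ : Flag P.Face, P.AdjacentFlags Φ Ψ → ¬ P.SameOrbit Φ Ψ

/-- The polytope `Q` is (isomorphic to) the section `G/F` of `P`: there is an order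
isomorphism from `Q` onto the interval `[F, G]` of `P`, shifting ranks by
`rank F + 1`. -/
def IsSection {m : ℕ} (Q : AbstractPolytope m) (F G : P.Face) : Prop :=
  F ≤ G ∧ ∃ e : Q.Face ≃o (Set.Icc F G),
    ∀ x : Q.Face, P.rank (e x : P.Face) = Q.rank x + P.rank F + 1

/-- `P` is equivelar of Schläfli type `{p 1, …, p (n-1)}`: every section between a
face of rank `i - 2` and a face of rank `i + 1` is a polygon with exactly `p i`
vertices (i.e. it contains exactly `p i` faces of rank `i - 1`). -/
def IsSchlafli (p : ℕ → ℕ) : Prop :=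
  ∀ i : ℕ, 1 ≤ i → i ≤ n - 1 →
    ∀ F G : P.Face, F < G → P.rank F = (i : ℤ) - 2 → P.rank G = (i : ℤ) + 1 →
      Nat.card {H : P.Face // F < H ∧ H < G ∧ P.rank H = (i : ℤ) - 1} = p i

/-- `P` is tight of type `{p 1, …, p (n-1)}`: it is equivelar of that type and has
exactly `2 p₁ ⋯ p_{n-1}` flags. -/
def IsTight (p : ℕ → ℕ) : Prop :=
  P.IsSchlafli p ∧ P.numFlags = 2 * ∏ i ∈ Finset.Icc 1 (n - 1), p i

end AbstractPolytope

/-!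
The automorphism group of a regular `n`-polytope is a string C-group `⟨ρ₀, …, ρₙ₋₁⟩`, simply
transitive on flags. If the polytope is not flat, then no section of rank at least two is, and a
section of rank `m` has at least `m + 1` vertices and at least `m + 1` facets. So if there are
fewer than `(16/3) (n + 1)!` flags, then every section of rank five has fewer than
`(16/3) 6! = 3840`. This leaves few possibilities: either the section has six vertices or six
facets, and its group is an extension of `S₆` by a group of order at most five, or a finite
enumeration of the numbers of vertices, facets and flags determines the types of its sections of
rank three. In each case the elements `(ρᵢ ρᵢ₊₁)³` are central in the group of the section, hence
in the whole group `Γ`, and so `Γ` acts on `n + 1` cosets of `⟨ρ₁, …, ρₙ₋₁⟩ Z(Γ)` with the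
generators as adjacent transpositions. The kernel of the resulting map of `Γ` onto `Sₙ₊₁` has
order less than `16/3`, hence order five if there are more than `4 (n + 1)!` flags. But it
contains the elements `(ρᵢ ρᵢ₊₁)³`, whose squares are trivial, so these are trivial. Then every
entry of the Schläfli symbol is `3`, and there are only `(n + 1)!` flags.
-/

open scoped Pointwise

section GroupActions

variable {G : Type*} [Group G]

theorem relIndex_stabilizer_eq_ncard {α : Type*} [MulAction G α] (A : Subgroup G) (x : α) :
    (MulAction.stabilizer G x).relIndex A = ((· • x) '' (A : Set G)).ncard := by
  have himage : (· • x) '' (A : Set G) = MulAction.orbit A x := by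
    rw [Set.image_eq_range]; rfl
  rw [himage, ← MulAction.index_stabilizer]; rfl

theorem stabilizer_smul_coe_one (U : Subgroup G) (g : G) :
    MulAction.stabilizer G (g • ((1 : G) : G ⧸ U)) = MulAut.conj g • U := by
  rw [MulAction.stabilizer_smul_eq_stabilizer_map_conj, MulAction.stabilizer_quotient]; rfl

theorem relIndex_eq_ncard_image_coe (A U : Subgroup G) :
    U.relIndex A = (((↑) : G → G ⧸ U) '' (A : Set G)).ncard := by
  have h := relIndex_stabilizer_eq_ncard A ((1 : G) : G ⧸ U)
  simpa only [MulAction.stabilizer_quotient, MulAction.Quotient.smul_coe, smul_eq_mul, mul_one]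
    using h

theorem relIndex_lt_relIndex_of_not_subset_mul [Finite G] {A B U : Subgroup G} (hAB : A ≤ B)
    (h : ¬ (B : Set G) ⊆ (A : Set G) * (U : Set G)) : U.relIndex A < U.relIndex B := by
  rw [relIndex_eq_ncard_image_coe, relIndex_eq_ncard_image_coe]
  refine Set.ncard_lt_ncard ⟨Set.image_mono hAB, fun hsub => h fun g hg => ?_⟩ (Set.toFinite _)
  obtain ⟨a, ha, hag⟩ := hsub (Set.mem_image_of_mem _ hg)
  exact ⟨a, ha, _, QuotientGroup.eq.1 hag, mul_inv_cancel_left a g⟩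

theorem card_mul_relIndex_of_le {A B : Subgroup G} (h : A ≤ B) :
    Nat.card A * A.relIndex B = Nat.card B := by
  simpa [Subgroup.relIndex_bot_left] using Subgroup.relIndex_mul_relIndex ⊥ A B bot_le h

theorem two_dvd_relIndex_of_mem_normalizer {D B : Subgroup G} (hDB : D ≤ B) {r : G} (hrB : r ∈ B)
    (hrD : r ∉ D) (hr : r * r = 1) (hnorm : r ∈ Subgroup.normalizer (D : Set G)) :
    2 ∣ D.relIndex B := by
  set N := B ⊓ Subgroup.normalizer (D : Set G)
  have hDN : D ≤ N := le_inf hDB Subgroup.le_normalizer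
  have : (D.subgroupOf N).Normal := Subgroup.normal_subgroupOf_of_le_normalizer inf_le_right
  let s : N ⧸ D.subgroupOf N := ((⟨r, hrB, hnorm⟩ : N) : N ⧸ D.subgroupOf N)
  have horder : orderOf s = 2 := by
    refine orderOf_eq_prime ?_ fun h => hrD ?_
    · rw [pow_two, ← QuotientGroup.mk_mul, QuotientGroup.eq_one_iff]
      simp [Subgroup.mem_subgroupOf, hr]
    · simpa [s, QuotientGroup.eq_one_iff, Subgroup.mem_subgroupOf] using h
  rw [← Subgroup.relIndex_mul_relIndex _ _ _ hDN inf_le_left]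
  exact Dvd.dvd.mul_right (horder ▸ orderOf_dvd_natCard s) _

theorem mem_conj_smul_iff {g x : G} {K : Subgroup G} :
    x ∈ MulAut.conj g • K ↔ g⁻¹ * x * g ∈ K := by
  rw [Subgroup.mem_pointwise_smul_iff_inv_smul_mem, ← map_inv, MulAut.smul_def,
    MulAut.conj_apply, inv_inv]

end GroupActions

/-! ### String C-groups and their sections -/

/-- The subgroup `⟨ρᵢ, …, ρⱼ₋₁⟩` generated by a block of consecutive generators; for the
distinguished generators of a regular polytope it is the group of a section. -/
def parabolic {G : Type*} [Group G] (ρ : ℕ → G) (i j : ℕ) : Subgroup G :=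
  Subgroup.closure (ρ '' Set.Ico i j)

namespace parabolic

variable {G : Type*} [Group G] {ρ : ℕ → G} {i j k l : ℕ}

theorem mono (hki : k ≤ i) (hjl : j ≤ l) : parabolic ρ i j ≤ parabolic ρ k l :=
  Subgroup.closure_mono (Set.image_mono (Set.Ico_subset_Ico hki hjl))

theorem generator_mem (hik : i ≤ k) (hkj : k < j) : ρ k ∈ parabolic ρ i j :=
  Subgroup.subset_closure ⟨k, ⟨hik, hkj⟩, rfl⟩

theorem le_iff {K : Subgroup G} :
    parabolic ρ i j ≤ K ↔ ∀ k, i ≤ k → k < j → ρ k ∈ K := by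
  rw [parabolic, Subgroup.closure_le, Set.image_subset_iff]
  exact ⟨fun h k hik hkj => h ⟨hik, hkj⟩, fun h k hk => h k hk.1 hk.2⟩

theorem eq_bot (hji : j ≤ i) : parabolic ρ i j = ⊥ := by
  simp [parabolic, Set.Ico_eq_empty_of_le hji]

theorem commute_of_mem {g x : G} (h : ∀ k, i ≤ k → k < j → Commute g (ρ k))
    (hx : x ∈ parabolic ρ i j) : Commute g x := by
  have hle : parabolic ρ i j ≤ Subgroup.centralizer {g} := le_iff.2 fun k hik hkj =>
    Subgroup.mem_centralizer_singleton_iff.2 (h k hik hkj).symm.eq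
  exact (Subgroup.mem_centralizer_singleton_iff.1 (hle hx)).symm

theorem smul_mem {α : Type*} [MulAction G α] (hρ : ∀ k, i ≤ k → k < j → ρ k * ρ k = 1)
    {X : Set α} (hX : ∀ k, i ≤ k → k < j → ∀ x ∈ X, ρ k • x ∈ X) {g : G}
    (hg : g ∈ parabolic ρ i j) {x : α} (hx : x ∈ X) : g • x ∈ X := by
  induction hg using Subgroup.closure_induction_left generalizing x with
  | one => simpa using hx
  | mul_left a ha b _ ih =>
    obtain ⟨k, ⟨hik, hkj⟩, rfl⟩ := ha
    rw [mul_smul]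
    exact hX k hik hkj _ (ih hx)
  | inv_mul_cancel a ha b _ ih =>
    obtain ⟨k, ⟨hik, hkj⟩, rfl⟩ := ha
    rw [mul_smul, inv_eq_of_mul_eq_one_left (hρ k hik hkj)]
    exact hX k hik hkj _ (ih hx)

end parabolic

section Sections

variable {G : Type*} [Group G] (ρ : ℕ → G) (i j : ℕ)

/-- The section with group `⟨ρᵢ, …, ρⱼ₋₁⟩` is flat: this group is the product of its
facet subgroup and its vertex subgroup. -/
def IsFlatSection : Prop :=
  (parabolic ρ i j : Set G) ⊆ (parabolic ρ i (j - 1) : Set G) * (parabolic ρ (i + 1) j : Set G)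

/-- The number of flags of the section with group `⟨ρᵢ, …, ρⱼ₋₁⟩`. -/
noncomputable def flagCount : ℕ := Nat.card (parabolic ρ i j)

/-- The number of vertices of the section with group `⟨ρᵢ, …, ρⱼ₋₁⟩`. -/
noncomputable def vertexCount : ℕ := (parabolic ρ (i + 1) j).relIndex (parabolic ρ i j)

/-- The number of facets of the section with group `⟨ρᵢ, …, ρⱼ₋₁⟩`. -/
noncomputable def facetCount : ℕ := (parabolic ρ i (j - 1)).relIndex (parabolic ρ i j)

/-- The number of vertices of a section that share an edge with its base vertex: the length of
the orbit of the vertex `ρᵢ • v₀` under the stabilizer of `v₀`. -/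
noncomputable def vertexValency : ℕ :=
  (MulAut.conj (ρ i) • parabolic ρ (i + 1) j).relIndex (parabolic ρ (i + 1) j)

/-- The number of facets of a section that share a ridge with its base facet. -/
noncomputable def facetValency : ℕ :=
  (MulAut.conj (ρ (j - 1)) • parabolic ρ i (j - 1)).relIndex (parabolic ρ i (j - 1))

/-- The `i`-th entry of the Schläfli symbol, indexed from `0`. -/
noncomputable def schlafli : ℕ := orderOf (ρ i * ρ (i + 1))

theorem vertexCount_mul_flagCount : vertexCount ρ i j * flagCount ρ (i + 1) j = flagCount ρ i j :=
  (mul_comm _ _).trans (card_mul_relIndex_of_le (parabolic.mono i.le_succ le_rfl))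

theorem facetCount_mul_flagCount :
    facetCount ρ i (j + 1) * flagCount ρ i j = flagCount ρ i (j + 1) :=
  (mul_comm _ _).trans (card_mul_relIndex_of_le (parabolic.mono le_rfl j.le_succ))

end Sections

/-- `ρ₀, …, ρₙ₋₁` are the distinguished generators of a string C-group which is not the product
of its facet subgroup and its vertex subgroup; these are the automorphism groups of the non-flat
regular `n`-polytopes. -/
structure IsNonflatStringCGroup {G : Type*} [Group G] (ρ : ℕ → G) (n : ℕ) : Prop where
  mul_self : ∀ i, i < n → ρ i * ρ i = 1
  commute_of_add_two_le : ∀ i j, i + 2 ≤ j → j < n → Commute (ρ i) (ρ j)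
  parabolic_inf : ∀ i j k l, j ≤ n → l ≤ n →
    parabolic ρ i j ⊓ parabolic ρ k l = parabolic ρ (max i k) (min j l)
  parabolic_eq_top : parabolic ρ 0 n = ⊤
  not_isFlatSection_zero : ¬ IsFlatSection ρ 0 n

namespace IsNonflatStringCGroup

section Flatness

variable {G : Type*} [Group G] {ρ : ℕ → G} {n : ℕ}

theorem inv_eq (h : IsNonflatStringCGroup ρ n) {i : ℕ} (hi : i < n) : (ρ i)⁻¹ = ρ i :=
  inv_eq_of_mul_eq_one_left (h.mul_self i hi)

theorem commute (h : IsNonflatStringCGroup ρ n) {i j : ℕ} (hi : i < n) (hj : j < n)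
    (hij : i + 2 ≤ j ∨ j + 2 ≤ i) : Commute (ρ i) (ρ j) := by
  rcases hij with hij | hij
  · exact h.commute_of_add_two_le i j hij hj
  · exact (h.commute_of_add_two_le j i hij hi).symm

theorem pos (h : IsNonflatStringCGroup ρ n) : 0 < n := by
  refine Nat.pos_of_ne_zero fun hn => h.not_isFlatSection_zero ?_
  subst hn
  simp [IsFlatSection, parabolic.eq_bot]

theorem commute_of_mem_parabolic (h : IsNonflatStringCGroup ρ n) {i j k : ℕ} (hk : k < n)
    (hj : j ≤ n) (hkij : k + 1 < i ∨ j < k) {x : G} (hx : x ∈ parabolic ρ i j) :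
    Commute (ρ k) x :=
  parabolic.commute_of_mem (fun _ _ _ => h.commute hk (by omega) (by omega)) hx

theorem parabolic_subset_of_mul_left (h : IsNonflatStringCGroup ρ n) {i j : ℕ} (hj : j ≤ n)
    {X : Set G} (hone : 1 ∈ X) (hX : ∀ k, i ≤ k → k < j → ∀ x ∈ X, ρ k * x ∈ X) :
    (parabolic ρ i j : Set G) ⊆ X := fun g hg => by
  simpa using parabolic.smul_mem (fun k _ _ => h.mul_self k (by omega)) hX hg hone

theorem parabolic_subset_of_mul_right (h : IsNonflatStringCGroup ρ n) {i j : ℕ} (hj : j ≤ n)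
    {X : Set G} (hone : 1 ∈ X) (hX : ∀ k, i ≤ k → k < j → ∀ x ∈ X, x * ρ k ∈ X) :
    (parabolic ρ i j : Set G) ⊆ X := fun g hg => by
  have hsub : (parabolic ρ i j : Set G) ⊆ X⁻¹ := by
    refine h.parabolic_subset_of_mul_left hj (by simpa using hone) fun k hik hkj x hx => ?_
    rw [Set.mem_inv, mul_inv_rev, h.inv_eq (by omega)]
    exact hX k hik hkj _ hx
  simpa using hsub (inv_mem hg)

theorem isFlatSection_add_one (h : IsNonflatStringCGroup ρ n) {i j : ℕ} (hij : i < j) (hj : j < n)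
    (hflat : IsFlatSection ρ i j) : IsFlatSection ρ i (j + 1) := by
  refine h.parabolic_subset_of_mul_left (by omega) ⟨1, one_mem _, 1, one_mem _, mul_one 1⟩ ?_
  rintro k hik hkj _ ⟨a, ha, b, hb, rfl⟩
  rcases Nat.lt_or_ge k j with hk | hk
  · exact ⟨ρ k * a, mul_mem (parabolic.generator_mem hik hk) ha, b, hb, mul_assoc _ _ _⟩
  obtain rfl : k = j := by omega
  obtain ⟨a', ha', b', hb', rfl⟩ := hflat ha
  have hcomm : ρ k * a' = a' * ρ k := h.commute_of_mem_parabolic hj (by omega) (by omega) ha'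
  exact ⟨a', parabolic.mono le_rfl (by omega) ha', ρ k * (b' * b),
    mul_mem (parabolic.generator_mem hij hkj) (mul_mem (parabolic.mono le_rfl (by omega) hb') hb),
    by simp only [← mul_assoc, hcomm]⟩

theorem isFlatSection_of_add_one (h : IsNonflatStringCGroup ρ n) {i j : ℕ} (hij : i + 1 < j)
    (hj : j ≤ n) (hflat : IsFlatSection ρ (i + 1) j) : IsFlatSection ρ i j := by
  refine h.parabolic_subset_of_mul_right hj ⟨1, one_mem _, 1, one_mem _, mul_one 1⟩ ?_
  rintro k hik hkj _ ⟨a, ha, b, hb, rfl⟩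
  rcases Nat.eq_or_lt_of_le hik with rfl | hk
  · obtain ⟨a', ha', b', hb', rfl⟩ := hflat hb
    have hcomm : ρ i * b' = b' * ρ i := h.commute_of_mem_parabolic (by omega) hj (by omega) hb'
    exact ⟨a * (a' * ρ i), mul_mem ha (mul_mem (parabolic.mono (by omega) le_rfl ha')
      (parabolic.generator_mem le_rfl (by omega))), b', parabolic.mono (by omega) le_rfl hb',
      by simp only [mul_assoc, hcomm]⟩
  · exact ⟨a, ha, b * ρ k, mul_mem hb (parabolic.generator_mem hk hkj), (mul_assoc _ _ _).symm⟩

theorem not_isFlatSection (h : IsNonflatStringCGroup ρ n) {i j : ℕ} (hij : i < j) (hj : j ≤ n) :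
    ¬ IsFlatSection ρ i j := by
  intro hflat
  have grow_left : ∀ k ≤ i, IsFlatSection ρ k j := fun k hk =>
    Nat.decreasingInduction (motive := fun k _ => IsFlatSection ρ k j)
      (fun k hk hflat => h.isFlatSection_of_add_one (by omega) hj hflat) hflat hk
  refine h.not_isFlatSection_zero (Nat.le_induction (P := fun m _ => m ≤ n → IsFlatSection ρ 0 m)
    (fun _ => grow_left 0 i.zero_le) (fun m hm ih hmn => ?_) n hj le_rfl)
  exact h.isFlatSection_add_one (by omega) (by omega) (ih (by omega))

theorem generator_notMem_parabolic (h : IsNonflatStringCGroup ρ n) {i j k : ℕ} (hk : k < n)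
    (hj : j ≤ n) (hkij : ¬ (i ≤ k ∧ k < j)) : ρ k ∉ parabolic ρ i j := by
  intro hmem
  have hone : ρ k ∈ parabolic ρ i j ⊓ parabolic ρ k (k + 1) :=
    ⟨hmem, parabolic.generator_mem le_rfl k.lt_succ_self⟩
  rw [h.parabolic_inf _ _ _ _ hj (by omega), parabolic.eq_bot (by omega), Subgroup.mem_bot] at hone
  have hbot : parabolic ρ k (k + 1) = ⊥ := le_bot_iff.1 <| parabolic.le_iff.2 fun l _ _ => by
    rw [show l = k by omega, hone]
    exact one_mem _
  exact h.not_isFlatSection k.lt_succ_self hk fun g hg =>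
    ⟨1, one_mem _, 1, one_mem _, by simpa [hbot, eq_comm] using hg⟩

end Flatness

end IsNonflatStringCGroup

section Reverse

variable {G : Type*} [Group G] (ρ : ℕ → G) {n i j : ℕ}

/-- The generators of the group of the dual polytope. -/
def reverseGenerators (n : ℕ) : ℕ → G := fun i => ρ (n - 1 - i)

theorem parabolic_reverse (hj : j ≤ n) :
    parabolic (reverseGenerators ρ n) i j = parabolic ρ (n - j) (n - i) := by
  apply le_antisymm
  · exact parabolic.le_iff.2 fun k _ _ => parabolic.generator_mem (by omega) (by omega)
  · refine parabolic.le_iff.2 fun k _ _ => ?_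
    have hk : ρ k = reverseGenerators ρ n (n - 1 - k) := congrArg ρ (by omega)
    exact hk ▸ parabolic.generator_mem (by omega) (by omega)

theorem flagCount_reverse (hj : j ≤ n) :
    flagCount (reverseGenerators ρ n) i j = flagCount ρ (n - j) (n - i) := by
  rw [flagCount, flagCount, parabolic_reverse _ hj]

theorem vertexCount_reverse (hj : j ≤ n) :
    vertexCount (reverseGenerators ρ n) i j = facetCount ρ (n - j) (n - i) := by
  rw [vertexCount, facetCount, parabolic_reverse _ hj, parabolic_reverse _ hj, Nat.sub_sub]

theorem vertexValency_reverse (hj : j ≤ n) :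
    vertexValency (reverseGenerators ρ n) i j = facetValency ρ (n - j) (n - i) := by
  rw [vertexValency, facetValency, parabolic_reverse _ hj, reverseGenerators, Nat.sub_sub n 1 i,
    add_comm 1 i, ← Nat.sub_sub n i 1]

end Reverse

section Restrict

variable {G : Type*} [Group G] (ρ : ℕ → G) {a b : ℕ}

/-- The generators `ρₐ, …, ρᵦ₋₁` of a section, reindexed from `0` and regarded as elements of the
group they generate. -/
noncomputable def restrictGenerators (a b : ℕ) : ℕ → parabolic ρ a b := fun i =>
  if h : a + i < b then ⟨ρ (a + i), parabolic.generator_mem (by omega) h⟩ else 1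

theorem coe_restrict {i : ℕ} (h : a + i < b) : (restrictGenerators ρ a b i : G) = ρ (a + i) := by
  simp [restrictGenerators, h]

theorem map_parabolic_restrict (i : ℕ) {j : ℕ} (hj : a + j ≤ b) :
    (parabolic (restrictGenerators ρ a b) i j).map (parabolic ρ a b).subtype =
      parabolic ρ (a + i) (a + j) := by
  apply le_antisymm
  · refine Subgroup.map_le_iff_le_comap.2 (parabolic.le_iff.2 fun k _ _ => ?_)
    rw [Subgroup.mem_comap, Subgroup.subtype_apply, coe_restrict _ (by omega)]
    exact parabolic.generator_mem (by omega) (by omega)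
  · refine parabolic.le_iff.2 fun k _ _ => Subgroup.mem_map.2
      ⟨restrictGenerators ρ a b (k - a), parabolic.generator_mem (by omega) (by omega), ?_⟩
    rw [Subgroup.subtype_apply, coe_restrict _ (by omega), Nat.add_sub_of_le (by omega)]

theorem mem_parabolic_restrict {i j : ℕ} (hj : a + j ≤ b) {x : parabolic ρ a b} :
    x ∈ parabolic (restrictGenerators ρ a b) i j ↔ (x : G) ∈ parabolic ρ (a + i) (a + j) := by
  simp [← map_parabolic_restrict ρ i hj]

theorem flagCount_restrict (i : ℕ) {j : ℕ} (hj : a + j ≤ b) :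
    flagCount (restrictGenerators ρ a b) i j = flagCount ρ (a + i) (a + j) := by
  rw [flagCount, flagCount, ← map_parabolic_restrict ρ i hj]
  exact (Subgroup.card_map_of_injective (Subgroup.subtype_injective _)).symm

theorem vertexCount_restrict (i : ℕ) {j : ℕ} (hj : a + j ≤ b) :
    vertexCount (restrictGenerators ρ a b) i j = vertexCount ρ (a + i) (a + j) := by
  rw [vertexCount, vertexCount, add_assoc a i 1, ← map_parabolic_restrict ρ i hj,
    ← map_parabolic_restrict ρ (i + 1) hj,
    Subgroup.relIndex_map_map_of_injective _ _ (Subgroup.subtype_injective _)]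

theorem schlafli_restrict {i : ℕ} (hi : a + i + 1 < b) :
    schlafli (restrictGenerators ρ a b) i = schlafli ρ (a + i) := by
  rw [schlafli, schlafli, ← Subgroup.orderOf_coe, Subgroup.coe_mul, coe_restrict _ (by omega),
    coe_restrict ρ (i := i + 1) hi, ← add_assoc]

end Restrict

namespace IsNonflatStringCGroup

section Counts

variable {G : Type*} [Group G] {ρ : ℕ → G} {n : ℕ}

theorem vertexCount_lt_add_one [Finite G] (h : IsNonflatStringCGroup ρ n) {i j : ℕ} (hij : i ≤ j)
    (hj : j < n) : vertexCount ρ i j < vertexCount ρ i (j + 1) := by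
  have hinf : vertexCount ρ i j = (parabolic ρ (i + 1) (j + 1)).relIndex (parabolic ρ i j) := by
    rw [← Subgroup.inf_relIndex_right, h.parabolic_inf _ _ _ _ (by omega) (by omega), vertexCount,
      max_eq_left (by omega), min_eq_right (by omega)]
  rw [hinf]
  exact relIndex_lt_relIndex_of_not_subset_mul (parabolic.mono le_rfl (by omega))
    (h.not_isFlatSection (by omega) (by omega))

theorem add_one_le_vertexCount [Finite G] (h : IsNonflatStringCGroup ρ n) {i : ℕ} (m : ℕ)
    (hm : i + m ≤ n) : m + 1 ≤ vertexCount ρ i (i + m) := by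
  induction m with
  | zero => simp [vertexCount, parabolic.eq_bot]
  | succ m ih =>
    have := h.vertexCount_lt_add_one (i := i) (j := i + m) (by omega) (by omega)
    have := ih (by omega)
    rw [← add_assoc]
    omega

theorem vertexValency_dvd (h : IsNonflatStringCGroup ρ n) {i j : ℕ} (hij : i < j) (hj : j ≤ n) :
    vertexValency ρ i j ∣ vertexCount ρ (i + 1) j := by
  refine Subgroup.relIndex_dvd_of_le_left _ fun x hx => ?_
  rw [mem_conj_smul_iff, mul_assoc,
    ← (h.commute_of_mem_parabolic (by omega) hj (by omega) hx).eq, inv_mul_cancel_left]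
  exact parabolic.mono (by omega) le_rfl hx

theorem not_subset_mul_conj_smul (h : IsNonflatStringCGroup ρ n) {i j : ℕ} (hij : i < j)
    (hj : j < n) :
    ¬ (parabolic ρ (i + 1) (j + 1) : Set G) ⊆ (parabolic ρ (i + 1) j : Set G) *
      (MulAut.conj (ρ i) • parabolic ρ (i + 1) (j + 1) : Subgroup G) := by
  intro hsub
  refine h.not_isFlatSection (i := i) (j := j + 1) (by omega) hj ?_
  refine h.parabolic_subset_of_mul_right hj ⟨1, one_mem _, 1, one_mem _, mul_one 1⟩ ?_
  rintro k hik hkj _ ⟨a, ha, b, hb, rfl⟩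
  rcases Nat.eq_or_lt_of_le hik with rfl | hk
  · obtain ⟨a', ha', b', hb', rfl⟩ := hsub hb
    have hmem : a' * ρ i ∈ parabolic ρ i j :=
      mul_mem (parabolic.mono (by omega) le_rfl ha') (parabolic.generator_mem le_rfl (by omega))
    exact ⟨a * (a' * ρ i), mul_mem ha hmem, _, mem_conj_smul_iff.1 hb', by group⟩
  · exact ⟨a, ha, b * ρ k, mul_mem hb (parabolic.generator_mem hk hkj), (mul_assoc _ _ _).symm⟩

theorem vertexValency_lt_add_one [Finite G] (h : IsNonflatStringCGroup ρ n) {i j : ℕ} (hij : i < j)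
    (hj : j < n) : vertexValency ρ i j < vertexValency ρ i (j + 1) := by
  have hinf : vertexValency ρ i j =
      (MulAut.conj (ρ i) • parabolic ρ (i + 1) (j + 1)).relIndex (parabolic ρ (i + 1) j) := by
    rw [vertexValency, ← Subgroup.inf_relIndex_right,
      ← Subgroup.inf_relIndex_right (MulAut.conj _ • parabolic ρ (i + 1) (j + 1))]
    congr 1
    ext x
    simp only [Subgroup.mem_inf, mem_conj_smul_iff, h.inv_eq (show i < n by omega)]
    refine and_congr_left fun hx => ⟨fun hmem => parabolic.mono le_rfl (by omega) hmem,
      fun hmem => ?_⟩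
    have hρ : ρ i ∈ parabolic ρ i j := parabolic.generator_mem le_rfl hij
    have hx' : ρ i * x * ρ i ∈ parabolic ρ i j :=
      mul_mem (mul_mem hρ (parabolic.mono (by omega) le_rfl hx)) hρ
    have hinf := Subgroup.mem_inf.2 ⟨hx', hmem⟩
    rwa [h.parabolic_inf _ _ _ _ (by omega) (by omega), max_eq_right (by omega),
      min_eq_left (by omega)] at hinf
  rw [hinf]
  exact relIndex_lt_relIndex_of_not_subset_mul (parabolic.mono le_rfl (by omega))
    (h.not_subset_mul_conj_smul hij hj)

theorem le_vertexValency [Finite G] (h : IsNonflatStringCGroup ρ n) {i : ℕ} (m : ℕ)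
    (hm : i + m ≤ n) : m ≤ vertexValency ρ i (i + m) := by
  induction m with
  | zero => exact Nat.zero_le _
  | succ m ih =>
    rcases Nat.eq_zero_or_pos m with rfl | hpos
    · simp [vertexValency, parabolic.eq_bot]
    have := h.vertexValency_lt_add_one (i := i) (j := i + m) (by omega) (by omega)
    have := ih (by omega)
    rw [← add_assoc]
    omega

theorem vertexValency_lt_vertexCount [Finite G] (h : IsNonflatStringCGroup ρ n) {i j : ℕ}
    (hij : i < j) (hj : j ≤ n) : vertexValency ρ i j < vertexCount ρ i j := by
  set U := parabolic ρ (i + 1) j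
  rw [vertexValency, ← stabilizer_smul_coe_one, relIndex_stabilizer_eq_ncard, vertexCount,
    relIndex_eq_ncard_image_coe]
  have hρ : ρ i ∈ parabolic ρ i j := parabolic.generator_mem le_rfl hij
  refine Set.ncard_lt_ncard ⟨?_, fun hsub => ?_⟩ (Set.toFinite _)
  · rintro _ ⟨u, hu, rfl⟩
    exact ⟨u * ρ i, mul_mem (parabolic.mono (by omega) le_rfl hu) hρ, by simp⟩
  · obtain ⟨u, hu, huρ⟩ := hsub ⟨1, one_mem _, rfl⟩
    have hmem : u * ρ i ∈ U := by
      have := QuotientGroup.eq.1 huρ.symm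
      simpa using this
    exact h.generator_notMem_parabolic (by omega) hj (by omega)
      ((Subgroup.mul_mem_cancel_left _ hu).1 hmem)

theorem two_dvd_vertexCount_mul_vertexValency (h : IsNonflatStringCGroup ρ n) {i j : ℕ}
    (hij : i < j) (hj : j ≤ n) : 2 ∣ vertexCount ρ i j * vertexValency ρ i j := by
  set U := parabolic ρ (i + 1) j
  have hi : i < n := by omega
  have hU : U ≤ parabolic ρ i j := parabolic.mono (by omega) le_rfl
  have hindex : vertexCount ρ i j * vertexValency ρ i j =
      (MulAut.conj (ρ i) • U ⊓ U).relIndex (parabolic ρ i j) := by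
    rw [mul_comm, vertexValency, vertexCount, ← Subgroup.inf_relIndex_right (MulAut.conj _ • _)]
    exact Subgroup.relIndex_mul_relIndex _ _ _ inf_le_right hU
  rw [hindex]
  refine two_dvd_relIndex_of_mem_normalizer (r := ρ i) (inf_le_right.trans hU)
    (parabolic.generator_mem le_rfl hij)
    (fun hmem => h.generator_notMem_parabolic hi hj (by omega) hmem.2) (h.mul_self i hi) ?_
  have hsq : ∀ x, ρ i * (ρ i * x * ρ i) * ρ i = x := fun x => by
    simp [mul_assoc, h.mul_self i hi, ← mul_assoc (ρ i) (ρ i) x]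
  refine Subgroup.mem_normalizer_iff.2 fun x => ?_
  simp only [Subgroup.mem_inf, mem_conj_smul_iff, h.inv_eq hi, hsq]
  exact and_comm

end Counts

section Dual

variable {G : Type*} [Group G] {ρ : ℕ → G} {n : ℕ}

theorem dual (h : IsNonflatStringCGroup ρ n) : IsNonflatStringCGroup (reverseGenerators ρ n) n where
  mul_self i hi := h.mul_self _ (by omega)
  commute_of_add_two_le i j hij hj := h.commute (by omega) (by omega) (by omega)
  parabolic_inf i j k l hj hl := by
    rw [parabolic_reverse _ hj, parabolic_reverse _ hl, parabolic_reverse _ (by omega),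
      h.parabolic_inf _ _ _ _ (by omega) (by omega)]
    congr 1 <;> omega
  parabolic_eq_top := by rw [parabolic_reverse _ le_rfl]; simpa using h.parabolic_eq_top
  not_isFlatSection_zero hflat := h.not_isFlatSection_zero fun g hg => by
    have hn := h.pos
    simp only [IsFlatSection, parabolic_reverse ρ (le_refl n),
      parabolic_reverse ρ (show n - 1 ≤ n by omega), Nat.sub_self, Nat.sub_zero,
      show n - (n - 1) = 1 by omega] at hflat
    obtain ⟨a, ha, b, hb, hab⟩ := hflat (inv_mem hg)
    exact ⟨b⁻¹, inv_mem hb, a⁻¹, inv_mem ha, by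
      rw [← inv_inv g, ← hab, mul_inv_rev]⟩

theorem add_one_le_facetCount [Finite G] (h : IsNonflatStringCGroup ρ n) {i : ℕ} (m : ℕ)
    (hm : i + m ≤ n) : m + 1 ≤ facetCount ρ i (i + m) := by
  have := h.dual.add_one_le_vertexCount (i := n - (i + m)) m (by omega)
  rw [vertexCount_reverse _ (by omega)] at this
  convert this using 2 <;> omega

theorem restrict (h : IsNonflatStringCGroup ρ n) {a m : ℕ} (hm : 0 < m)
    (ham : a + m ≤ n) : IsNonflatStringCGroup (restrictGenerators ρ a (a + m)) m where
  mul_self i hi := by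
    ext
    rw [Subgroup.coe_mul, coe_restrict _ (by omega), h.mul_self _ (by omega), Subgroup.coe_one]
  commute_of_add_two_le i j hij hj := by
    ext
    rw [Subgroup.coe_mul, Subgroup.coe_mul, coe_restrict _ (by omega), coe_restrict _ (by omega)]
    exact h.commute (by omega) (by omega) (by omega)
  parabolic_inf i j k l hj hl := by
    ext x
    rw [Subgroup.mem_inf, mem_parabolic_restrict _ (by omega), mem_parabolic_restrict _ (by omega),
      mem_parabolic_restrict _ (by omega), ← Subgroup.mem_inf,
      h.parabolic_inf _ _ _ _ (by omega) (by omega), Nat.add_max_add_left, Nat.add_min_add_left]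
  parabolic_eq_top := by
    ext x
    simp [mem_parabolic_restrict ρ (le_refl (a + m))]
  not_isFlatSection_zero hflat := h.not_isFlatSection (show a < a + m by omega) ham fun g hg => by
    obtain ⟨x, hx, y, hy, hxy⟩ := hflat
      ((mem_parabolic_restrict ρ le_rfl (x := ⟨g, hg⟩)).2 (by simpa using hg))
    rw [SetLike.mem_coe, mem_parabolic_restrict _ (by omega)] at hx hy
    rw [Nat.add_sub_assoc (by omega)]
    exact ⟨x, hx, y, hy, congrArg Subtype.val hxy⟩

end Dual

end IsNonflatStringCGroup

/-! ### Actions by adjacent transpositions -/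

section CosetPoints

variable {G : Type*} [Group G]

/-- The product `ρᵢ₊ₘ₋₁ ⋯ ρᵢ₊₁ ρᵢ`. -/
def descendingProd (ρ : ℕ → G) (i : ℕ) : ℕ → G
  | 0 => 1
  | m + 1 => ρ (i + m) * descendingProd ρ i m

/-- The `k`-th of the cosets `U, ρ₀ U, ρ₁ ρ₀ U, …`, on which the generators act as adjacent
transpositions when `IsTranspositionStabilizer ρ n U` holds. -/
def cosetPoint (ρ : ℕ → G) (U : Subgroup G) (k : ℕ) : G ⧸ U :=
  descendingProd ρ 0 k • ((1 : G) : G ⧸ U)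

/-- Membership conditions on `U` that make each `ρⱼ` act on `cosetPoint ρ U 0, …,
cosetPoint ρ U n` as the transposition of the points `j` and `j + 1`, so that `U` is the
stabilizer of the point `0`. -/
structure IsTranspositionStabilizer (ρ : ℕ → G) (n : ℕ) (U : Subgroup G) : Prop where
  generator_mem : ∀ i, 1 ≤ i → i < n → ρ i ∈ U
  conj_mem : ∀ j, j + 2 ≤ n →
    (descendingProd ρ 0 (j + 2))⁻¹ * ρ j * descendingProd ρ 0 (j + 2) ∈ U

theorem smul_smul_coe_one_eq_iff {U : Subgroup G} {g x : G} :
    x • g • ((1 : G) : G ⧸ U) = g • ((1 : G) : G ⧸ U) ↔ g⁻¹ * x * g ∈ U := by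
  rw [← MulAction.mem_stabilizer_iff, stabilizer_smul_coe_one, mem_conj_smul_iff]

/-- The orbit of the base vertex `⟨ρ₁, …, ρₙ₋₁⟩` under `⟨ρ₀, …, ρₖ₋₁⟩`: the vertices of the base
`k`-face. -/
def baseOrbit (ρ : ℕ → G) (n k : ℕ) : Set (G ⧸ parabolic ρ 1 n) :=
  (· • cosetPoint ρ (parabolic ρ 1 n) 0) '' (parabolic ρ 0 k : Set G)

variable (ρ : ℕ → G)

theorem descendingProd_add_one (i m : ℕ) :
    descendingProd ρ i (m + 1) = descendingProd ρ (i + 1) m * ρ i := by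
  induction m with
  | zero => simp [descendingProd]
  | succ m ih =>
    rw [descendingProd, ih, descendingProd, mul_assoc, add_right_comm, add_assoc]

theorem descendingProd_mem_parabolic (i m : ℕ) : descendingProd ρ i m ∈ parabolic ρ i (i + m) := by
  induction m with
  | zero => exact one_mem _
  | succ m ih =>
    exact mul_mem (parabolic.generator_mem (by omega) (by omega))
      (parabolic.mono le_rfl (by omega) ih)

theorem coe_descendingProd_restrict {a b i m : ℕ} (hm : a + i + m ≤ b) :
    ((descendingProd (restrictGenerators ρ a b) i m : parabolic ρ a b) : G) =
      descendingProd ρ (a + i) m := by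
  induction m with
  | zero => rfl
  | succ m ih =>
    rw [descendingProd, descendingProd, Subgroup.coe_mul, ih (by omega), coe_restrict _ (by omega),
      add_assoc]

theorem cosetPoint_zero (U : Subgroup G) : cosetPoint ρ U 0 = ((1 : G) : G ⧸ U) := one_smul _ _

theorem smul_cosetPoint_self (U : Subgroup G) (k : ℕ) :
    ρ k • cosetPoint ρ U k = cosetPoint ρ U (k + 1) := by
  rw [cosetPoint, cosetPoint, smul_smul, descendingProd, zero_add]

end CosetPoints

namespace IsNonflatStringCGroup

section Transpositions

variable {G : Type*} [Group G] {ρ : ℕ → G} {n : ℕ} {U : Subgroup G}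

theorem smul_cosetPoint_add_one (h : IsNonflatStringCGroup ρ n) {k : ℕ} (hk : k < n) :
    ρ k • cosetPoint ρ U (k + 1) = cosetPoint ρ U k := by
  rw [← smul_cosetPoint_self, smul_smul, h.mul_self k hk, one_smul]

theorem smul_cosetPoint_of_lt (h : IsNonflatStringCGroup ρ n) {j k : ℕ} (hkj : k < j) (hj : j < n)
    (hU : ρ j ∈ U) : ρ j • cosetPoint ρ U k = cosetPoint ρ U k := by
  have hcomm : Commute (ρ j) (descendingProd ρ 0 k) :=
    h.commute_of_mem_parabolic hj (by omega) (by omega) (descendingProd_mem_parabolic ρ 0 k)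
  rwa [cosetPoint, smul_smul_coe_one_eq_iff, mul_assoc, hcomm.eq, inv_mul_cancel_left]

theorem smul_cosetPoint (h : IsNonflatStringCGroup ρ n) (hU : IsTranspositionStabilizer ρ n U)
    {j k : ℕ} (hj : j < n) (hk : k ≤ n) :
    ρ j • cosetPoint ρ U k = cosetPoint ρ U (Equiv.swap j (j + 1) k) := by
  rcases lt_trichotomy k j with hkj | rfl | hjk
  · rw [Equiv.swap_apply_of_ne_of_ne (by omega) (by omega)]
    exact h.smul_cosetPoint_of_lt hkj hj (hU.generator_mem j (by omega) hj)
  · rw [Equiv.swap_apply_left, smul_cosetPoint_self]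
  rcases Nat.eq_or_lt_of_le hjk with rfl | hjk
  · rw [Nat.succ_eq_add_one, Equiv.swap_apply_right, h.smul_cosetPoint_add_one hj]
  rw [Equiv.swap_apply_of_ne_of_ne (by omega) (by omega)]
  induction k, hjk using Nat.le_induction with
  | base => exact smul_smul_coe_one_eq_iff.2 (hU.conj_mem j hk)
  | succ m hm ih =>
    rw [← smul_cosetPoint_self, smul_smul, (h.commute hj (by omega) (by omega)).eq, mul_smul,
      ih (by omega) (by omega)]

theorem exists_eq_cosetPoint (h : IsNonflatStringCGroup ρ n)
    (hU : IsTranspositionStabilizer ρ n U) (x : G ⧸ U) : ∃ k ≤ n, cosetPoint ρ U k = x := by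
  obtain ⟨g, rfl⟩ := QuotientGroup.mk_surjective x
  have hg : g ∈ parabolic ρ 0 n := h.parabolic_eq_top ▸ Subgroup.mem_top g
  have hmem := parabolic.smul_mem (α := G ⧸ U) (X := {x | ∃ k ≤ n, cosetPoint ρ U k = x})
    (fun k _ hk => h.mul_self k hk) ?_ hg ⟨0, n.zero_le, cosetPoint_zero ρ U⟩
  · simpa [MulAction.Quotient.smul_coe] using hmem
  · rintro j _ hj _ ⟨k, hk, rfl⟩
    refine ⟨_, ?_, (h.smul_cosetPoint hU hj hk).symm⟩
    rw [Equiv.swap_apply_def]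
    split_ifs <;> omega

theorem index_le_of_isTranspositionStabilizer (h : IsNonflatStringCGroup ρ n)
    (hU : IsTranspositionStabilizer ρ n U) : U.index ≤ n + 1 := by
  have hsurj : Function.Surjective fun k : Fin (n + 1) => cosetPoint ρ U k := fun x => by
    obtain ⟨k, hk, rfl⟩ := h.exists_eq_cosetPoint hU x
    exact ⟨⟨k, by omega⟩, rfl⟩
  simpa [Subgroup.index] using Nat.card_le_card_of_surjective _ hsurj

theorem cosetPoint_ne_of_lt (h : IsNonflatStringCGroup ρ n) (hU : IsTranspositionStabilizer ρ n U)
    (h0 : ρ 0 ∉ U) (a b : ℕ) (hab : a < b) (hb : b ≤ n) : cosetPoint ρ U a ≠ cosetPoint ρ U b := by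
  intro heq
  have move (k : ℕ) (hk : k < n) : cosetPoint ρ U (Equiv.swap k (k + 1) a) =
      cosetPoint ρ U (Equiv.swap k (k + 1) b) := by
    rw [← h.smul_cosetPoint hU hk (by omega), ← h.smul_cosetPoint hU hk hb, heq]
  match a, b with
  | a + 1, b =>
    refine cosetPoint_ne_of_lt h hU h0 a b (by omega) hb ?_
    have := move a (by omega)
    rwa [Equiv.swap_apply_right, Equiv.swap_apply_of_ne_of_ne (by omega) (by omega)] at this
  | 0, b + 2 =>
    refine cosetPoint_ne_of_lt h hU h0 0 (b + 1) (by omega) (by omega) ?_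
    have := move (b + 1) (by omega)
    rwa [Equiv.swap_apply_right, Equiv.swap_apply_of_ne_of_ne (by omega) (by omega)] at this
  | 0, 1 =>
    rw [← smul_cosetPoint_self] at heq
    exact h0 (by simpa [cosetPoint_zero, cosetPoint, descendingProd]
      using smul_smul_coe_one_eq_iff.1 heq.symm)
termination_by a + b

theorem exists_surjective_perm (h : IsNonflatStringCGroup ρ n)
    (hU : IsTranspositionStabilizer ρ n U) (h0 : ρ 0 ∉ U) :
    ∃ φ : G →* Equiv.Perm (Fin (n + 1)), Function.Surjective φ ∧
      ∀ i : Fin n, φ (ρ i) = Equiv.swap i.castSucc i.succ := by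
  have hbij : Function.Bijective fun k : Fin (n + 1) => cosetPoint ρ U k := by
    refine ⟨.of_lt_imp_ne fun a b hab =>
      h.cosetPoint_ne_of_lt hU h0 a b hab (by omega), fun x => ?_⟩
    obtain ⟨k, hk, rfl⟩ := h.exists_eq_cosetPoint hU x
    exact ⟨⟨k, by omega⟩, rfl⟩
  let e := Equiv.ofBijective _ hbij
  let φ : G →* Equiv.Perm (Fin (n + 1)) :=
    e.symm.permCongrHom.toMonoidHom.comp (MulAction.toPermHom G (G ⧸ U))
  have hφ (i : Fin n) : φ (ρ i) = Equiv.swap i.castSucc i.succ := by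
    ext1 k
    change e.symm (ρ i • cosetPoint ρ U k) = _
    rw [Equiv.symm_apply_eq, h.smul_cosetPoint hU i.2 (by omega)]
    change _ = cosetPoint ρ U _
    congr 1
    simp only [Equiv.swap_apply_def, Fin.ext_iff, Fin.val_castSucc, Fin.val_succ]
    split_ifs <;> simp
  refine ⟨φ, MonoidHom.mrange_eq_top.1 (top_le_iff.1 ?_), hφ⟩
  rw [← Equiv.Perm.mclosure_swap_castSucc_succ, Submonoid.closure_le]
  rintro _ ⟨i, rfl⟩
  exact ⟨ρ i, hφ i⟩

end Transpositions

section MinimalVertexCount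

variable {G : Type*} [Group G] {ρ : ℕ → G} {n : ℕ}

theorem vertexCount_eq_add_one_of_le [Finite G] (h : IsNonflatStringCGroup ρ n)
    (hv : vertexCount ρ 0 n = n + 1) {k : ℕ} (hk : k ≤ n) : vertexCount ρ 0 k = k + 1 :=
  Nat.decreasingInduction (motive := fun k _ => vertexCount ρ 0 k = k + 1) (fun k hk ih => by
    have := h.vertexCount_lt_add_one k.zero_le hk
    have := h.add_one_le_vertexCount (i := 0) k (by omega)
    rw [zero_add] at this
    omega) hv hk

theorem ncard_baseOrbit (h : IsNonflatStringCGroup ρ n) {k : ℕ} (hk : k ≤ n) :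
    (baseOrbit ρ n k).ncard = vertexCount ρ 0 k := by
  rw [baseOrbit, ← relIndex_stabilizer_eq_ncard, cosetPoint_zero, MulAction.stabilizer_quotient,
    ← Subgroup.inf_relIndex_right, h.parabolic_inf _ _ _ _ le_rfl hk, vertexCount,
    max_eq_left (by omega), min_eq_right hk]

theorem cosetPoint_mem_baseOrbit (k : ℕ) : cosetPoint ρ (parabolic ρ 1 n) k ∈ baseOrbit ρ n k :=
  ⟨descendingProd ρ 0 k, by simpa using descendingProd_mem_parabolic ρ 0 k,
    by simp [cosetPoint, descendingProd]⟩

theorem smul_mem_baseOrbit {j k : ℕ} (hj : j < k) {x : G ⧸ parabolic ρ 1 n}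
    (hx : x ∈ baseOrbit ρ n k) : ρ j • x ∈ baseOrbit ρ n k := by
  obtain ⟨a, ha, rfl⟩ := hx
  exact ⟨ρ j * a, mul_mem (parabolic.generator_mem (by omega) hj) ha, mul_smul _ _ _⟩

theorem baseOrbit_add_one [Finite G] (h : IsNonflatStringCGroup ρ n)
    (hv : vertexCount ρ 0 n = n + 1) {k : ℕ} (hk : k < n)
    (hmem : cosetPoint ρ (parabolic ρ 1 n) (k + 1) ∉ baseOrbit ρ n k) :
    baseOrbit ρ n (k + 1) = insert (cosetPoint ρ (parabolic ρ 1 n) (k + 1)) (baseOrbit ρ n k) := by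
  refine (Set.eq_of_subset_of_ncard_le (Set.insert_subset (cosetPoint_mem_baseOrbit _) ?_) ?_
    (Set.toFinite _)).symm
  · exact Set.image_mono (parabolic.mono le_rfl k.le_succ)
  · rw [Set.ncard_insert_of_notMem hmem (Set.toFinite _), h.ncard_baseOrbit hk,
      h.ncard_baseOrbit hk.le, h.vertexCount_eq_add_one_of_le hv hk,
      h.vertexCount_eq_add_one_of_le hv hk.le]

theorem smul_eq_of_mem_baseOrbit (h : IsNonflatStringCGroup ρ n) {j k : ℕ} (hkj : k < j)
    (hj : j < n) {x : G ⧸ parabolic ρ 1 n} (hx : x ∈ baseOrbit ρ n k) : ρ j • x = x := by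
  obtain ⟨a, ha, rfl⟩ := hx
  have hcomm : Commute (ρ j) a := h.commute_of_mem_parabolic hj (by omega) (by omega) ha
  simp only [smul_smul, hcomm.eq]
  rw [mul_smul, h.smul_cosetPoint_of_lt (by omega) hj (parabolic.generator_mem (by omega) hj)]

theorem cosetPoint_notMem_baseOrbit [Finite G] (h : IsNonflatStringCGroup ρ n)
    (hv : vertexCount ρ 0 n = n + 1) {k : ℕ} (hk : k < n) :
    cosetPoint ρ (parabolic ρ 1 n) (k + 1) ∉ baseOrbit ρ n k := by
  intro hmem
  have hfix : ∀ x ∈ baseOrbit ρ n k, ρ k • x ∈ baseOrbit ρ n k := by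
    intro x hx
    cases k with
    | zero =>
      obtain ⟨a, ha, rfl⟩ := hx
      rw [parabolic.eq_bot le_rfl, SetLike.mem_coe, Subgroup.mem_bot] at ha
      simpa [ha, smul_cosetPoint_self] using hmem
    | succ k =>
      rw [h.baseOrbit_add_one hv (by omega) (h.cosetPoint_notMem_baseOrbit hv (by omega))] at hx
      obtain rfl | hx := hx
      · rwa [smul_cosetPoint_self]
      · rw [h.smul_eq_of_mem_baseOrbit k.lt_succ_self hk hx]
        exact Set.image_mono (parabolic.mono le_rfl k.le_succ) hx
  have hsub : baseOrbit ρ n (k + 1) ⊆ baseOrbit ρ n k := by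
    rintro _ ⟨a, ha, rfl⟩
    refine parabolic.smul_mem (fun l _ _ => h.mul_self l (by omega)) (fun l _ hl x hx => ?_) ha
      ⟨1, one_mem _, one_smul _ _⟩
    rcases Nat.lt_succ_iff_lt_or_eq.1 hl with hl | rfl
    exacts [smul_mem_baseOrbit hl hx, hfix x hx]
  have hcard := Set.ncard_le_ncard hsub (Set.toFinite _)
  rw [h.ncard_baseOrbit hk, h.ncard_baseOrbit hk.le, h.vertexCount_eq_add_one_of_le hv hk,
    h.vertexCount_eq_add_one_of_le hv hk.le] at hcard
  omega
termination_by k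

theorem isTranspositionStabilizer_parabolic [Finite G] (h : IsNonflatStringCGroup ρ n)
    (hv : vertexCount ρ 0 n = n + 1) : IsTranspositionStabilizer ρ n (parabolic ρ 1 n) := by
  refine ⟨fun i h1 hi => parabolic.generator_mem h1 hi, fun j hj =>
    smul_smul_coe_one_eq_iff.1 (?_ : ρ j • cosetPoint ρ _ (j + 2) = cosetPoint ρ _ (j + 2))⟩
  have hnotMem := h.cosetPoint_notMem_baseOrbit hv (k := j + 1) (by omega)
  have hmem := smul_mem_baseOrbit (j := j) (by omega)
    (cosetPoint_mem_baseOrbit (ρ := ρ) (n := n) (j + 2))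
  rw [h.baseOrbit_add_one hv (by omega) hnotMem] at hmem
  refine hmem.resolve_right fun hlow => hnotMem ?_
  have hback := smul_mem_baseOrbit j.lt_succ_self hlow
  rwa [smul_smul, h.mul_self j (by omega), one_smul] at hback

theorem vertexCount_eq_add_two_of_braid [Finite G] {m : ℕ} (h : IsNonflatStringCGroup ρ (m + 1))
    (hm : 0 < m) (hbraid : ρ 0 * ρ 1 * ρ 0 = ρ 1 * ρ 0 * ρ 1)
    (hv : vertexCount ρ 1 (m + 1) = m + 1) : vertexCount ρ 0 (m + 1) = m + 2 := by
  have hres := (h.restrict (a := 1) hm (by omega)).isTranspositionStabilizer_parabolic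
    (by rw [vertexCount_restrict _ _ le_rfl, add_comm 1 m, hv])
  refine le_antisymm ?_
    (by simpa only [zero_add] using h.add_one_le_vertexCount (m + 1) (zero_add _).le)
  rw [vertexCount, h.parabolic_eq_top, Subgroup.relIndex_top_right]
  refine h.index_le_of_isTranspositionStabilizer
    ⟨fun i h1 hi => parabolic.generator_mem h1 hi, fun j hj => ?_⟩
  rcases j with _ | j
  · have hconj : (descendingProd ρ 0 2)⁻¹ * ρ 0 * descendingProd ρ 0 2 = ρ 1 := by
      have h00 := h.mul_self 0 (by omega)
      have h11 := h.mul_self 1 (by omega)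
      calc (descendingProd ρ 0 2)⁻¹ * ρ 0 * descendingProd ρ 0 2
          = ρ 0 * ρ 1 * ρ 0 * (ρ 1 * ρ 0) := by
            simp [descendingProd, h.inv_eq (i := 0), h.inv_eq (i := 1) (by omega)]
        _ = ρ 1 * ρ 0 * (ρ 1 * ρ 1) * ρ 0 := by rw [hbraid]; group
        _ = ρ 1 := by rw [h11, mul_one, mul_assoc, h00, mul_one]
    rw [hconj]
    exact parabolic.generator_mem le_rfl (by omega)
  · have hmem := hres.conj_mem j (by omega)
    rw [mem_parabolic_restrict _ (by omega), Subgroup.coe_mul, Subgroup.coe_mul, Subgroup.coe_inv,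
      coe_descendingProd_restrict _ (by omega), coe_restrict _ (by omega), add_comm 1 j,
      add_comm 1 m] at hmem
    set x := (descendingProd ρ 1 (j + 2))⁻¹ * ρ (j + 1) * descendingProd ρ 1 (j + 2) with hx
    have hcomm : Commute (ρ 0) x := h.commute_of_mem_parabolic (by omega) le_rfl (by omega) hmem
    have hconj : (descendingProd ρ 0 (j + 1 + 2))⁻¹ * ρ (j + 1) * descendingProd ρ 0 (j + 1 + 2) =
        x := by
      calc _ = (ρ 0)⁻¹ * (x * ρ 0) := by rw [descendingProd_add_one, hx]; group
        _ = x := by rw [← hcomm.eq, inv_mul_cancel_left]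
    rw [hconj]
    exact parabolic.mono (by omega) le_rfl hmem

end MinimalVertexCount

end IsNonflatStringCGroup

section Involutions

variable {G : Type*} [Group G]

theorem semiconjBy_mul_inv_left {a b : G} (ha : a * a = 1) (hb : b * b = 1) :
    SemiconjBy a (a * b) (a * b)⁻¹ := by
  rw [SemiconjBy, mul_inv_rev, inv_mul_cancel_right, ← mul_assoc, ha, one_mul,
    inv_eq_of_mul_eq_one_left hb]

theorem commute_of_mem_zpowers {g x y : G} (hx : x ∈ Subgroup.zpowers g)
    (hy : y ∈ Subgroup.zpowers g) : Commute x y := by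
  obtain ⟨k, rfl⟩ := Subgroup.mem_zpowers_iff.1 hx
  obtain ⟨l, rfl⟩ := Subgroup.mem_zpowers_iff.1 hy
  exact (Commute.refl g).zpow_zpow k l

theorem mem_zpowers_or_mul_mem_zpowers {a b x : G} (ha : a * a = 1) (hb : b * b = 1)
    (hx : x ∈ Subgroup.closure {a, b}) :
    x ∈ Subgroup.zpowers (a * b) ∨ x * a ∈ Subgroup.zpowers (a * b) := by
  set Z := Subgroup.zpowers (a * b)
  have hab : a * b ∈ Z := Subgroup.mem_zpowers _
  have hba : b * a ∈ Z := by
    simpa [inv_eq_of_mul_eq_one_left ha, inv_eq_of_mul_eq_one_left hb] using inv_mem hab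
  have mul_right : ∀ x, (x ∈ Z ∨ x * a ∈ Z) → ∀ c ∈ ({a, b} : Set G),
      x * c ∈ Z ∨ x * c * a ∈ Z := by
    rintro x (hx | hx) c (rfl | rfl)
    · exact Or.inr (by rwa [mul_assoc, ha, mul_one])
    · exact Or.inr (by rw [mul_assoc]; exact mul_mem hx hba)
    · exact Or.inl hx
    · exact Or.inl (by simpa [mul_assoc, ← mul_assoc a, ha] using mul_mem hx hab)
  have inv_eq : ∀ c ∈ ({a, b} : Set G), c⁻¹ = c := by
    rintro c (rfl | rfl)
    exacts [inv_eq_of_mul_eq_one_left ha, inv_eq_of_mul_eq_one_left hb]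
  induction hx using Subgroup.closure_induction_right with
  | one => exact Or.inl (one_mem _)
  | mul_right x _ c hc ih => exact mul_right x ih c hc
  | mul_inv_cancel x _ c hc ih => rw [inv_eq c hc]; exact mul_right x ih c hc

theorem card_closure_pair_of_not_commute {a b : G} (ha : a * a = 1) (hb : b * b = 1)
    (hab : ¬ Commute a b) :
    Nat.card (Subgroup.closure {a, b}) = 2 * orderOf (a * b) := by
  set Z := Subgroup.zpowers (a * b)
  have ha_mem : a ∈ Subgroup.closure {a, b} := Subgroup.subset_closure (by simp)
  have hb_mem : b ∈ Subgroup.closure {a, b} := Subgroup.subset_closure (by simp)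
  have haZ : a ∉ Z := fun haZ => hab <| commute_of_mem_zpowers haZ <| by
    simpa [← mul_assoc, ha] using mul_mem haZ (Subgroup.mem_zpowers (a * b))
  have hindex : Z.relIndex (Subgroup.closure {a, b}) = 2 := by
    refine Subgroup.relIndex_eq_two_iff.2 ⟨a, ha_mem, fun x hx => ?_⟩
    rcases mem_zpowers_or_mul_mem_zpowers ha hb hx with h | h
    · exact Or.inr ⟨h, fun hxa => haZ ((Subgroup.mul_mem_cancel_left _ h).1 hxa)⟩
    · exact Or.inl ⟨h, fun hx => haZ ((Subgroup.mul_mem_cancel_left _ hx).1 h)⟩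
  rw [← card_mul_relIndex_of_le (Subgroup.zpowers_le.2 (mul_mem ha_mem hb_mem)), hindex,
    Nat.card_zpowers, mul_comm]

end Involutions

namespace IsNonflatStringCGroup

section Schlafli

variable {G : Type*} [Group G] {ρ : ℕ → G} {n : ℕ}

theorem not_commute (h : IsNonflatStringCGroup ρ n) {i : ℕ} (hi : i + 1 < n) :
    ¬ Commute (ρ i) (ρ (i + 1)) := by
  intro hcomm
  have hi_mem : ρ i ∈ parabolic ρ i (i + 1) := parabolic.generator_mem le_rfl (by omega)
  have hj_mem : ρ (i + 1) ∈ parabolic ρ (i + 1) (i + 2) :=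
    parabolic.generator_mem le_rfl (by omega)
  refine h.not_isFlatSection (i := i) (j := i + 2) (by omega) (by omega) ?_
  refine h.parabolic_subset_of_mul_left (by omega) ⟨1, one_mem _, 1, one_mem _, mul_one 1⟩ ?_
  rintro k hik hkj _ ⟨a, ha, b, hb, rfl⟩
  obtain rfl | rfl : k = i ∨ k = i + 1 := by omega
  · exact ⟨ρ k * a, mul_mem hi_mem ha, b, hb, mul_assoc _ _ _⟩
  · have hcomm_a : Commute (ρ (i + 1)) a := parabolic.commute_of_mem (fun l hil hli => by
      rw [show l = i by omega]; exact hcomm.symm) ha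
    exact ⟨a, ha, ρ (i + 1) * b, mul_mem hj_mem hb, (hcomm_a.left_comm b).symm⟩

theorem flagCount_add_one (h : IsNonflatStringCGroup ρ n) {i : ℕ} (hi : i < n) :
    flagCount ρ i (i + 1) = 2 := by
  have hclosure : parabolic ρ i (i + 1) = Subgroup.zpowers (ρ i) := by
    rw [parabolic, Set.Ico_add_one_right_eq_Icc, Set.Icc_self, Set.image_singleton,
      Subgroup.zpowers_eq_closure]
  rw [flagCount, hclosure, Nat.card_zpowers]
  refine orderOf_eq_prime (by rw [pow_two, h.mul_self i hi]) fun hone => ?_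
  exact h.generator_notMem_parabolic (i := 0) (j := 0) hi (by omega) (by omega)
    (hone ▸ one_mem _)

theorem flagCount_add_two (h : IsNonflatStringCGroup ρ n) {i : ℕ} (hi : i + 1 < n) :
    flagCount ρ i (i + 2) = 2 * schlafli ρ i := by
  have hpair : Set.Ico i (i + 2) = {i, i + 1} := by ext; simp; omega
  rw [flagCount, parabolic, hpair, Set.image_pair]
  exact card_closure_pair_of_not_commute (h.mul_self _ (by omega)) (h.mul_self _ hi)
    (h.not_commute hi)

theorem vertexCount_add_two (h : IsNonflatStringCGroup ρ n) {i : ℕ} (hi : i + 1 < n) :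
    vertexCount ρ i (i + 2) = schlafli ρ i := by
  have hcount := vertexCount_mul_flagCount ρ i (i + 2)
  rw [h.flagCount_add_two hi, h.flagCount_add_one hi] at hcount
  omega

theorem three_le_schlafli [Finite G] (h : IsNonflatStringCGroup ρ n) {i : ℕ} (hi : i + 1 < n) :
    3 ≤ schlafli ρ i :=
  (h.add_one_le_vertexCount 2 (by omega)).trans_eq (h.vertexCount_add_two hi)

end Schlafli

end IsNonflatStringCGroup

/-! ### Small kernels and cubes of products of generators -/

section SmallNormalSubgroups

variable {G : Type*} [Group G] {K : Subgroup G} [K.Normal] {z : G}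

theorem commute_of_mem_normal_of_card_eq_two (hK : Nat.card K = 2) (hz : z ∈ K) (g : G) :
    Commute g z := by
  by_cases hz1 : z = 1
  · exact hz1 ▸ Commute.one_right g
  have hconj : (⟨g * z * g⁻¹, ‹K.Normal›.conj_mem z hz g⟩ : K) = ⟨z, hz⟩ :=
    ((Nat.card_eq_two_iff' (1 : K)).1 hK).unique (by simpa [Subtype.ext_iff] using hz1)
      (by simpa [Subtype.ext_iff] using hz1)
  exact mul_inv_eq_iff_eq_mul.1 (congrArg Subtype.val hconj)

theorem commute_of_card_le_five [Finite G] (hG : Nat.card G ≤ 5) (a b : G) : Commute a b := by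
  have of_prime : ∀ p : ℕ, p.Prime → Nat.card G = p → Commute a b := fun p hp hcard => by
    have : Fact p.Prime := ⟨hp⟩
    have : IsCyclic G := isCyclic_of_prime_card hcard
    exact mul_comm' a b
  have hpos : 0 < Nat.card G := Nat.card_pos
  interval_cases hcard : Nat.card G
  · have := (Nat.card_eq_one_iff_unique.1 hcard).1
    exact Subsingleton.elim _ _
  · exact of_prime 2 (by norm_num) rfl
  · exact of_prime 3 (by norm_num) rfl
  · have : Fact (Nat.Prime 2) := ⟨by norm_num⟩
    have := IsPGroup.isMulCommutative_of_card_eq_prime_sq (p := 2) (G := G) (by rw [hcard]; rfl)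
    exact mul_comm' a b
  · exact of_prime 5 (by norm_num) rfl

theorem commute_of_pow_five_mem [Finite K] (hK : Nat.card K ≤ 5) {g : G} (hg : g ^ 5 ∈ K)
    (hz : z ∈ K) : Commute g z := by
  have : Fintype K := Fintype.ofFinite K
  have : Fact (Nat.Prime 5) := ⟨by norm_num⟩
  let σ : Equiv.Perm K := MulAut.toPerm K (MulAut.conjNormal g)
  have hσ : σ ^ 5 ^ 1 = 1 := by
    rw [pow_one, ← map_pow, ← map_pow, ← map_one (MulAut.toPerm K)]
    congr 1
    ext x
    rw [MulAut.conjNormal_apply]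
    exact mul_inv_eq_iff_eq_mul.2
      (congrArg Subtype.val (commute_of_card_le_five hK ⟨g ^ 5, hg⟩ x).eq)
  have hfixed : 0 < σ.supportᶜ.card :=
    Finset.card_pos.2 ⟨1, Finset.mem_compl.2 <| Equiv.Perm.notMem_support.2 <|
      map_one (MulAut.conjNormal g : MulAut K)⟩
  have hmod := Equiv.Perm.card_compl_support_modEq hσ
  have hσ1 : σ = 1 := by
    rw [← Equiv.Perm.card_support_eq_zero]
    rw [Nat.card_eq_fintype_card, ← Finset.card_add_card_compl σ.support] at hK
    rw [← Finset.card_add_card_compl σ.support, Nat.ModEq] at hmod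
    omega
  exact mul_inv_eq_iff_eq_mul.1 (congrArg Subtype.val (DFunLike.congr_fun hσ1 (⟨z, hz⟩ : K)))

end SmallNormalSubgroups

section SymmetricQuotient

variable {G : Type*} [Group G] {α : Type*} [Fintype α] {φ : G →* Equiv.Perm α}

theorem card_eq_factorial_mul_card_ker (hφ : Function.Surjective φ) :
    Nat.card G = (Fintype.card α).factorial * Nat.card φ.ker := by
  classical
  rw [← Subgroup.index_mul_card φ.ker, Subgroup.index_ker, MonoidHom.range_eq_top.2 hφ,
    Subgroup.card_top, Nat.card_eq_fintype_card, Fintype.card_perm]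

theorem exists_pow_five_eq_one (hα : 5 ≤ Fintype.card α) :
    ∃ σ : Equiv.Perm α, σ ≠ 1 ∧ σ ^ 5 = 1 := by
  classical
  have : Fact (Nat.Prime 5) := ⟨by norm_num⟩
  have hdvd : 5 ∣ Fintype.card (Equiv.Perm α) := by
    rw [Fintype.card_perm]; exact Nat.dvd_factorial (by norm_num) hα
  obtain ⟨σ, hσ⟩ := exists_prime_orderOf_dvd_card 5 hdvd
  exact ⟨σ, by rintro rfl; simp at hσ, by rw [← hσ, pow_orderOf_eq_one]⟩

/-- An element of order five of the quotient centralizes the kernel, so the image of the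
centralizer of the kernel is a nontrivial normal subgroup of the symmetric group. -/
theorem commute_of_map_mem_alternatingGroup [DecidableEq α] [Finite G] (hφ : Function.Surjective φ)
    (hα : 5 ≤ Fintype.card α) (hker : Nat.card φ.ker ≤ 5) {g z : G}
    (hg : φ g ∈ alternatingGroup α) (hz : z ∈ φ.ker) : Commute g z := by
  set C := Subgroup.centralizer (φ.ker : Set G)
  have hkerC : φ.ker ≤ C := fun x hx => Subgroup.mem_centralizer_iff.2 fun y hy =>
    congrArg Subtype.val (commute_of_card_le_five hker ⟨y, hy⟩ ⟨x, hx⟩).eq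
  have hnormal : (C.map φ).Normal := Subgroup.Normal.map inferInstance φ hφ
  have hnontrivial : Nontrivial (C.map φ) := by
    obtain ⟨σ, hσ1, hσ5⟩ := exists_pow_five_eq_one hα
    obtain ⟨s, rfl⟩ := hφ σ
    have hsC : s ∈ C := Subgroup.mem_centralizer_iff.2 fun x hx =>
      (commute_of_pow_five_mem hker (by rwa [MonoidHom.mem_ker, map_pow]) hx).eq.symm
    exact (Subgroup.nontrivial_iff_exists_ne_one _).2 ⟨φ s, Subgroup.mem_map_of_mem φ hsC, hσ1⟩
  obtain ⟨c, hc, hcg⟩ := Equiv.Perm.alternatingGroup_le_of_normal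
    (by rwa [Nat.card_eq_fintype_card]) hnontrivial hg
  have hgC : g ∈ C := by
    have hmem : c⁻¹ * g ∈ C := hkerC (by rw [MonoidHom.mem_ker, map_mul, map_inv, hcg]; simp)
    exact (Subgroup.mul_mem_cancel_left C (inv_mem hc)).1 hmem
  exact (Subgroup.mem_centralizer_iff.1 hgC z hz).symm

end SymmetricQuotient

section GeneratorCube

variable {G : Type*} [Group G] (ρ : ℕ → G)

/-- The element `(ρᵢ ρᵢ₊₁)³`: it lies in the kernel of every homomorphism to a symmetric group
that sends the generators to the adjacent transpositions. -/
def generatorCube (i : ℕ) : G := (ρ i * ρ (i + 1)) ^ 3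

theorem generatorCube_mem_parabolic {i j k : ℕ} (hji : j ≤ i) (hik : i + 1 < k) :
    generatorCube ρ i ∈ parabolic ρ j k :=
  pow_mem (mul_mem (parabolic.generator_mem hji (by omega))
    (parabolic.generator_mem (by omega) hik)) 3

variable {ρ}

theorem generatorCube_mem_ker {n : ℕ} {φ : G →* Equiv.Perm (Fin (n + 1))}
    (hφ : ∀ i : Fin n, φ (ρ i) = Equiv.swap i.castSucc i.succ) {i : ℕ} (hi : i + 1 < n) :
    generatorCube ρ i ∈ φ.ker := by
  have hcycle := Equiv.Perm.isThreeCycle_swap_mul_swap_same (a := (⟨i + 1, by omega⟩ : Fin (n + 1)))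
    (b := ⟨i, by omega⟩) (c := ⟨i + 2, by omega⟩) (by simp) (by simp) (by simp)
  rw [generatorCube, MonoidHom.mem_ker, map_pow, map_mul, hφ ⟨i, by omega⟩, hφ ⟨i + 1, hi⟩,
    Equiv.swap_comm, ← hcycle.orderOf]
  exact pow_orderOf_eq_one _

theorem coe_generatorCube_restrict (ρ : ℕ → G) {a b i : ℕ} (hi : a + i + 1 < b) :
    ((generatorCube (restrictGenerators ρ a b) i : parabolic ρ a b) : G) =
      generatorCube ρ (a + i) := by
  rw [generatorCube, generatorCube, Subgroup.coe_pow, Subgroup.coe_mul, coe_restrict _ (by omega),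
    coe_restrict ρ (i := i + 1) hi, ← add_assoc]

end GeneratorCube

namespace IsNonflatStringCGroup

variable {G : Type*} [Group G] {ρ : ℕ → G} {n : ℕ}

theorem braid (h : IsNonflatStringCGroup ρ n) {i : ℕ} (hi : i + 1 < n)
    (hcube : generatorCube ρ i = 1) :
    ρ i * ρ (i + 1) * ρ i = ρ (i + 1) * ρ i * ρ (i + 1) := by
  have hprod : ρ i * ρ (i + 1) * ρ i * (ρ (i + 1) * ρ i * ρ (i + 1)) = 1 := by
    rw [← hcube]
    simp only [generatorCube, pow_succ, pow_zero, one_mul, mul_assoc]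
  simpa [mul_inv_rev, h.inv_eq hi, h.inv_eq (show i < n by omega), mul_assoc]
    using eq_inv_of_mul_eq_one_left hprod

theorem semiconjBy_generatorCube_left (h : IsNonflatStringCGroup ρ n) {i : ℕ} (hi : i + 1 < n) :
    SemiconjBy (ρ i) (generatorCube ρ i) (generatorCube ρ i)⁻¹ := by
  rw [generatorCube, ← inv_pow]
  exact (semiconjBy_mul_inv_left (h.mul_self _ (by omega)) (h.mul_self _ hi)).pow_right 3

theorem generatorCube_mul_self (h : IsNonflatStringCGroup ρ n) {i : ℕ} (hi : i + 1 < n)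
    (hcomm : Commute (ρ i) (generatorCube ρ i)) : generatorCube ρ i * generatorCube ρ i = 1 :=
  mul_eq_one_iff_eq_inv.2 <| mul_right_cancel <|
    hcomm.eq.symm.trans (h.semiconjBy_generatorCube_left hi).eq

theorem commute_generatorCube_of_lt_or_lt (h : IsNonflatStringCGroup ρ n) {i k : ℕ}
    (hi : i + 1 < n) (hk : k < n) (hki : k + 1 < i ∨ i + 2 < k) :
    Commute (ρ k) (generatorCube ρ i) :=
  h.commute_of_mem_parabolic hk hi hki (generatorCube_mem_parabolic ρ le_rfl (by omega))

theorem exists_surjective_perm_of_vertexCount [Finite G] (h : IsNonflatStringCGroup ρ n)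
    (hv : vertexCount ρ 0 n = n + 1) :
    ∃ φ : G →* Equiv.Perm (Fin (n + 1)), Function.Surjective φ ∧
      (∀ i : Fin n, φ (ρ i) = Equiv.swap i.castSucc i.succ) ∧
      flagCount ρ 0 n = (n + 1).factorial * Nat.card φ.ker := by
  obtain ⟨φ, hsurj, hφ⟩ := h.exists_surjective_perm (h.isTranspositionStabilizer_parabolic hv)
    (h.generator_notMem_parabolic h.pos le_rfl (by omega))
  refine ⟨φ, hsurj, hφ, ?_⟩
  rw [flagCount, h.parabolic_eq_top, Subgroup.card_top, card_eq_factorial_mul_card_ker hsurj,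
    Fintype.card_fin]

theorem commute_generatorCube_of_flagCount_eq_two_mul [Finite G]
    (h : IsNonflatStringCGroup ρ n) (hv : vertexCount ρ 0 n = n + 1)
    (hN : flagCount ρ 0 n = 2 * (n + 1).factorial) {i : ℕ} (hi : i + 1 < n) (g : G) :
    Commute g (generatorCube ρ i) := by
  obtain ⟨φ, -, hφ, hcard⟩ := h.exists_surjective_perm_of_vertexCount hv
  have hker : Nat.card φ.ker = 2 := by
    have := (n + 1).factorial_pos
    nlinarith
  exact commute_of_mem_normal_of_card_eq_two hker (generatorCube_mem_ker hφ hi) g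

theorem commute_generatorCube_of_flagCount_lt [Finite G] (h : IsNonflatStringCGroup ρ n)
    (hn : 5 ≤ n) (hv : vertexCount ρ 0 n = n + 1) (hN : flagCount ρ 0 n < 6 * (n + 1).factorial)
    {i k : ℕ} (hi : i + 1 < n) (hk : k < n) : Commute (ρ k) (generatorCube ρ i) := by
  obtain ⟨φ, hsurj, hφ, hcard⟩ := h.exists_surjective_perm_of_vertexCount hv
  have hker : Nat.card φ.ker ≤ 5 := by
    have := (n + 1).factorial_pos
    nlinarith
  obtain ⟨l, hl, hli⟩ : ∃ l < n, l + 1 < i ∨ i + 2 < l := by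
    rcases Nat.lt_or_ge i 2 with h2 | h2
    · exact ⟨4, by omega, by omega⟩
    · exact ⟨0, by omega, by omega⟩
  have heven : φ (ρ k * ρ l) ∈ alternatingGroup (Fin (n + 1)) := by
    rw [Equiv.Perm.mem_alternatingGroup, map_mul, map_mul, hφ ⟨k, hk⟩, hφ ⟨l, hl⟩,
      Equiv.Perm.sign_swap Fin.castSucc_lt_succ.ne, Equiv.Perm.sign_swap Fin.castSucc_lt_succ.ne]
    rfl
  have hcomm := commute_of_map_mem_alternatingGroup hsurj (by simp; omega) hker heven
    (generatorCube_mem_ker hφ hi)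
  simpa [mul_assoc, h.mul_self l hl] using
    hcomm.mul_left (h.commute_generatorCube_of_lt_or_lt hi hl hli)

end IsNonflatStringCGroup

section BaseEdge

variable {G : Type*} [Group G]

theorem generatorCube_eq_one {ρ : ℕ → G} {i : ℕ} (h3 : schlafli ρ i = 3) :
    generatorCube ρ i = 1 := by
  rw [generatorCube, ← h3]
  exact pow_orderOf_eq_one _

/-- The orbit of the vertex `ρ₁ ρ₀ • v₀` under the stabilizer `⟨ρ₂, …, ρₙ₋₁⟩` of the base edge. For
triangular `2`-faces these are the third vertices of the `2`-faces containing the base edge. -/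
def baseEdgeLink (ρ : ℕ → G) (n : ℕ) : Set (G ⧸ parabolic ρ 1 n) :=
  (· • ρ 1 • ρ 0 • ((1 : G) : G ⧸ parabolic ρ 1 n)) '' (parabolic ρ 2 n : Set G)

theorem vertexValency_eq_ncard (ρ : ℕ → G) (n : ℕ) : vertexValency ρ 0 n =
    ((· • ρ 0 • ((1 : G) : G ⧸ parabolic ρ 1 n)) '' (parabolic ρ 1 n : Set G)).ncard := by
  rw [← relIndex_stabilizer_eq_ncard, stabilizer_smul_coe_one]; rfl

theorem smul_coe_one_of_mem {U : Subgroup G} {g : G} (hg : g ∈ U) :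
    g • ((1 : G) : G ⧸ U) = ((1 : G) : G ⧸ U) := by
  rwa [← MulAction.mem_stabilizer_iff, MulAction.stabilizer_quotient]

end BaseEdge

namespace IsNonflatStringCGroup

variable {G : Type*} [Group G] {ρ : ℕ → G} {n : ℕ}

theorem vertexCount_eq_card (h : IsNonflatStringCGroup ρ n) :
    vertexCount ρ 0 n = Nat.card (G ⧸ parabolic ρ 1 n) := by
  rw [vertexCount, h.parabolic_eq_top, Subgroup.relIndex_top_right]; rfl

theorem smul_coe_one_ne (h : IsNonflatStringCGroup ρ n) :
    ρ 0 • ((1 : G) : G ⧸ parabolic ρ 1 n) ≠ ((1 : G) : G ⧸ parabolic ρ 1 n) := by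
  rw [ne_eq, ← MulAction.mem_stabilizer_iff, MulAction.stabilizer_quotient]
  exact h.generator_notMem_parabolic h.pos le_rfl (by omega)

theorem smul_smul_self (h : IsNonflatStringCGroup ρ n) {i : ℕ} (hi : i < n) {α : Type*}
    [MulAction G α] (x : α) : ρ i • ρ i • x = x := by
  rw [smul_smul, h.mul_self i hi, one_smul]

theorem smul_braid (h : IsNonflatStringCGroup ρ n) {i : ℕ} (hi : i + 1 < n)
    (h3 : schlafli ρ i = 3) {α : Type*} [MulAction G α] (x : α) :
    ρ i • ρ (i + 1) • ρ i • x = ρ (i + 1) • ρ i • ρ (i + 1) • x := by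
  simp only [smul_smul, ← mul_assoc, h.braid hi (generatorCube_eq_one h3)]

theorem smul_braid_four (h : IsNonflatStringCGroup ρ n) {i : ℕ} (hi : i + 1 < n)
    (h4 : schlafli ρ i = 4) {α : Type*} [MulAction G α] (x : α) :
    ρ i • ρ (i + 1) • ρ i • ρ (i + 1) • x = ρ (i + 1) • ρ i • ρ (i + 1) • ρ i • x := by
  have hpow : (ρ i * ρ (i + 1)) ^ 4 = 1 := h4 ▸ pow_orderOf_eq_one _
  have hsq : (ρ i * ρ (i + 1)) ^ 2 = ((ρ i * ρ (i + 1)) ^ 2)⁻¹ :=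
    eq_inv_of_mul_eq_one_left (by rw [← pow_add, hpow])
  have hsmul := congrArg (· • x) hsq
  simpa [pow_two, mul_smul, h.inv_eq hi, h.inv_eq (show i < n by omega)] using hsmul

theorem smul_opposite (h : IsNonflatStringCGroup ρ n) {i : ℕ} (hi : i + 1 < n)
    (h4 : schlafli ρ i = 4) {α : Type*} [MulAction G α] {x : α} (hx : ρ (i + 1) • x = x) :
    ρ (i + 1) • ρ i • ρ (i + 1) • ρ i • x = ρ i • ρ (i + 1) • ρ i • x := by
  simpa only [hx] using (h.smul_braid_four hi h4 x).symm

theorem smul_smul_coe_one (h : IsNonflatStringCGroup ρ n) {k : ℕ} (hk : 2 ≤ k)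
    (hkn : k < n) : ρ k • ρ 0 • ((1 : G) : G ⧸ parabolic ρ 1 n) =
      ρ 0 • ((1 : G) : G ⧸ parabolic ρ 1 n) := by
  rw [smul_smul, ← (h.commute_of_add_two_le 0 k hk hkn).eq, mul_smul,
    smul_coe_one_of_mem (parabolic.generator_mem (by omega) hkn)]

theorem vertexValency_eq_four (h : IsNonflatStringCGroup ρ 3) [Finite G] (h1 : schlafli ρ 1 = 4) :
    vertexValency ρ 0 3 = 4 := by
  have hdvd : vertexValency ρ 0 3 ∣ 4 := by
    simpa [h.vertexCount_add_two (i := 1) (by omega), h1]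
      using h.vertexValency_dvd (i := 0) (j := 3) (by omega) le_rfl
  have hle := h.le_vertexValency (i := 0) 3 (by omega)
  have := Nat.le_of_dvd (by norm_num) hdvd
  rw [zero_add] at hle
  interval_cases vertexValency ρ 0 3 <;> omega

theorem nodup_of_schlafli_eq_four (h : IsNonflatStringCGroup ρ 3) [Finite G]
    (h1 : schlafli ρ 1 = 4) {a : G ⧸ parabolic ρ 1 3} (ha : a = ρ 0 • ((1 : G) : G ⧸ _)) :
    [a, ρ 1 • a, ρ 2 • ρ 1 • a, ρ 1 • ρ 2 • ρ 1 • a].Nodup := by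
  have ha2 : ρ 2 • a = a := ha ▸ h.smul_smul_coe_one le_rfl (by omega)
  have hd2 : ρ 2 • ρ 1 • ρ 2 • ρ 1 • a = ρ 1 • ρ 2 • ρ 1 • a :=
    h.smul_opposite (by omega) h1 ha2
  set l := [a, ρ 1 • a, ρ 2 • ρ 1 • a, ρ 1 • ρ 2 • ρ 1 • a] with hl
  have hsub : (· • a) '' (parabolic ρ 1 3 : Set G) ⊆ (l.toFinset : Set (G ⧸ parabolic ρ 1 3)) := by
    rintro _ ⟨g, hg, rfl⟩
    refine parabolic.smul_mem (fun k _ => h.mul_self k) ?_ hg (by simp [hl])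
    intro k hk1 hk3 x hx
    simp only [hl, Finset.mem_coe, List.mem_toFinset, List.mem_cons, List.not_mem_nil,
      or_false] at hx ⊢
    interval_cases k <;> rcases hx with hx | hx | hx | hx <;> rw [hx] <;>
      simp only [ha2, hd2, h.smul_smul_self (i := 1) (by omega),
        h.smul_smul_self (i := 2) (by omega), true_or, or_true]
  have hcard : l.length ≤ l.toFinset.card := by
    rw [← Set.ncard_coe_finset]
    refine le_trans (le_of_eq ?_) (Set.ncard_le_ncard hsub)
    rw [ha, ← vertexValency_eq_ncard, h.vertexValency_eq_four h1]; rfl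
  exact Multiset.coe_nodup.1 <| Multiset.toFinset_card_eq_card_iff_nodup.1 <|
    le_antisymm (List.toFinset_card_le l) hcard

theorem seven_le_vertexCount (h : IsNonflatStringCGroup ρ 3) [Finite G] (h0 : schlafli ρ 0 = 4)
    (h1 : schlafli ρ 1 = 4) : 7 ≤ vertexCount ρ 0 3 := by
  obtain ⟨u, hu⟩ : ∃ u : G ⧸ parabolic ρ 1 3, u = ((1 : G) : G ⧸ _) := ⟨_, rfl⟩
  have hu1 : ρ 1 • u = u := hu ▸ smul_coe_one_of_mem (parabolic.generator_mem le_rfl (by omega))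
  have : ρ 2 • u = u := hu ▸ smul_coe_one_of_mem (parabolic.generator_mem (by omega) (by omega))
  have hnodup := h.nodup_of_schlafli_eq_four h1 (a := ρ 0 • u) (hu ▸ rfl)
  have ha2 : ρ 2 • ρ 0 • u = ρ 0 • u := hu ▸ h.smul_smul_coe_one le_rfl (by omega)
  have hopp0 : ρ 1 • ρ 0 • ρ 1 • ρ 0 • u = ρ 0 • ρ 1 • ρ 0 • u :=
    h.smul_opposite (by omega) h0 hu1
  have hopp1 : ρ 2 • ρ 1 • ρ 2 • ρ 1 • ρ 0 • u = ρ 1 • ρ 2 • ρ 1 • ρ 0 • u :=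
    h.smul_opposite (by omega) h1 ha2
  have hcomm (x : G ⧸ parabolic ρ 1 3) : ρ 0 • ρ 2 • x = ρ 2 • ρ 0 • x := by
    rw [smul_smul, (h.commute_of_add_two_le 0 2 le_rfl (by omega)).eq, mul_smul]
  have hinv0 : ∀ x : G ⧸ parabolic ρ 1 3, ρ 0 • ρ 0 • x = x := h.smul_smul_self (by omega)
  have hinv1 : ∀ x : G ⧸ parabolic ρ 1 3, ρ 1 • ρ 1 • x = x := h.smul_smul_self (by omega)
  have hinv2 : ∀ x : G ⧸ parabolic ρ 1 3, ρ 2 • ρ 2 • x = x := h.smul_smul_self (by omega)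
  have hlist : [u, ρ 0 • ρ 1 • ρ 0 • u, ρ 2 • ρ 0 • ρ 1 • ρ 0 • u, ρ 0 • u, ρ 1 • ρ 0 • u,
      ρ 2 • ρ 1 • ρ 0 • u, ρ 1 • ρ 2 • ρ 1 • ρ 0 • u].Nodup := by
    simp only [List.nodup_cons, List.mem_cons, List.not_mem_nil, or_false, not_or,
      not_false_eq_true, List.nodup_nil, and_true] at hnodup ⊢
    constructorm* _ ∧ _ <;> grind
  have : Fintype (G ⧸ parabolic ρ 1 3) := Fintype.ofFinite _
  rw [h.vertexCount_eq_card, Nat.card_eq_fintype_card]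
  exact hlist.length_le_card

theorem conj_smul_inf_eq [Finite G] (h : IsNonflatStringCGroup ρ n) {i j : ℕ} (hij : i < j)
    (hj : j ≤ n) (hval : vertexValency ρ i j = vertexCount ρ (i + 1) j) :
    MulAut.conj (ρ i) • parabolic ρ (i + 1) j ⊓ parabolic ρ (i + 1) j = parabolic ρ (i + 2) j := by
  have hmono : parabolic ρ (i + 2) j ≤ parabolic ρ (i + 1) j := parabolic.mono (by omega) le_rfl
  refine (Subgroup.eq_of_le_of_card_ge (le_inf (fun x hx => ?_) hmono) ?_).symm
  · rw [mem_conj_smul_iff, mul_assoc,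
      ← (h.commute_of_mem_parabolic (by omega) hj (by omega) hx).eq, inv_mul_cancel_left]
    exact hmono hx
  · have hinf := card_mul_relIndex_of_le (A := MulAut.conj (ρ i) • parabolic ρ (i + 1) j ⊓
      parabolic ρ (i + 1) j) (B := parabolic ρ (i + 1) j) inf_le_right
    rw [Subgroup.inf_relIndex_right, ← card_mul_relIndex_of_le hmono] at hinf
    change _ * vertexValency ρ i j = _ * vertexCount ρ (i + 1) j at hinf
    rw [hval] at hinf
    refine (Nat.eq_of_mul_eq_mul_right (Nat.pos_of_ne_zero ?_) hinf).le
    exact Subgroup.index_ne_zero_of_finite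

theorem ncard_baseEdgeLink [Finite G] (h : IsNonflatStringCGroup ρ n) (hn : 1 < n)
    (hval : vertexValency ρ 0 n = vertexCount ρ 1 n) :
    (baseEdgeLink ρ n).ncard = vertexValency ρ 1 n := by
  rw [baseEdgeLink, ← relIndex_stabilizer_eq_ncard, smul_smul, stabilizer_smul_coe_one,
    vertexValency, ← Subgroup.inf_relIndex_right,
    ← Subgroup.inf_relIndex_right (MulAut.conj (ρ 1) • _)]
  congr 1
  ext x
  have hρ : ρ 1 ∈ parabolic ρ 1 n := parabolic.generator_mem le_rfl hn
  have hmem : x ∈ parabolic ρ 2 n → (ρ 1)⁻¹ * x * ρ 1 ∈ parabolic ρ 1 n := fun hx =>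
    mul_mem (mul_mem (inv_mem hρ) (parabolic.mono (by omega) le_rfl hx)) hρ
  have hinf := congrArg ((ρ 1)⁻¹ * x * ρ 1 ∈ ·) (h.conj_smul_inf_eq h.pos le_rfl hval)
  simp only [zero_add, Subgroup.mem_inf, mem_conj_smul_iff, eq_iff_iff] at hinf
  simp only [Subgroup.mem_inf, mem_conj_smul_iff, mul_inv_rev, Nat.reduceAdd, ← hinf]
  grind

theorem smul_eq_of_mem_baseEdgeLink (h : IsNonflatStringCGroup ρ n) (hn : 1 < n)
    (h0 : schlafli ρ 0 = 3) {x : G ⧸ parabolic ρ 1 n} (hx : x ∈ baseEdgeLink ρ n) :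
    ρ 0 • x = x := by
  obtain ⟨g, hg, rfl⟩ := hx
  have hcomm : ρ 0 * g = g * ρ 0 := h.commute_of_mem_parabolic h.pos le_rfl (by omega) hg
  have hone : ρ 1 • ((1 : G) : G ⧸ parabolic ρ 1 n) = ((1 : G) : G ⧸ parabolic ρ 1 n) :=
    smul_coe_one_of_mem (parabolic.generator_mem le_rfl hn)
  have hbraid := h.smul_braid (i := 0) hn h0 ((1 : G) : G ⧸ parabolic ρ 1 n)
  simp only [zero_add, hone] at hbraid
  beta_reduce
  rw [smul_smul, hcomm, mul_smul, hbraid]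

theorem coe_one_notMem_baseEdgeLink (h : IsNonflatStringCGroup ρ n) (hn : 1 < n)
    (h0 : schlafli ρ 0 = 3) : ((1 : G) : G ⧸ parabolic ρ 1 n) ∉ baseEdgeLink ρ n :=
  fun hx => h.smul_coe_one_ne (h.smul_eq_of_mem_baseEdgeLink hn h0 hx)

theorem smul_coe_one_notMem_baseEdgeLink (h : IsNonflatStringCGroup ρ n) (hn : 1 < n)
    (h0 : schlafli ρ 0 = 3) : ρ 0 • ((1 : G) : G ⧸ parabolic ρ 1 n) ∉ baseEdgeLink ρ n := by
  intro hx
  have hfix := h.smul_eq_of_mem_baseEdgeLink hn h0 hx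
  rw [h.smul_smul_self h.pos] at hfix
  exact h.smul_coe_one_ne hfix.symm

theorem smul_eq_of_vertexCount_le [Finite G] (h : IsNonflatStringCGroup ρ n) (hn : 1 < n)
    (h0 : schlafli ρ 0 = 3) (hv : vertexCount ρ 0 n ≤ (baseEdgeLink ρ n).ncard + 3)
    {x : G ⧸ parabolic ρ 1 n} (hx1 : x ≠ ((1 : G) : G ⧸ parabolic ρ 1 n))
    (hx0 : x ≠ ρ 0 • ((1 : G) : G ⧸ parabolic ρ 1 n)) : ρ 0 • x = x := by
  set u : G ⧸ parabolic ρ 1 n := ((1 : G) : G ⧸ parabolic ρ 1 n)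
  have hfix : ∀ x ∈ baseEdgeLink ρ n, ρ 0 • x = x := fun x => h.smul_eq_of_mem_baseEdgeLink hn h0
  have hinv : ∀ x : G ⧸ parabolic ρ 1 n, ρ 0 • ρ 0 • x = x := h.smul_smul_self h.pos
  have hcompl : (insert u (insert (ρ 0 • u) (baseEdgeLink ρ n)))ᶜ.ncard ≤ 1 := by
    rw [Set.ncard_compl, Set.ncard_insert_of_notMem,
      Set.ncard_insert_of_notMem (h.smul_coe_one_notMem_baseEdgeLink hn h0),
      ← h.vertexCount_eq_card]
    · omega
    · rw [Set.mem_insert_iff, not_or]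
      exact ⟨h.smul_coe_one_ne.symm, h.coe_one_notMem_baseEdgeLink hn h0⟩
  rw [Set.ncard_le_one_iff] at hcompl
  by_contra hx
  refine hx (hcompl ?_ ?_) <;> simp only [Set.mem_compl_iff, Set.mem_insert_iff] <;> grind

theorem vertexValency_le_of_vertexCount_le [Finite G] (h : IsNonflatStringCGroup ρ n) (hn : 1 < n)
    (h0 : schlafli ρ 0 = 3) (hv : vertexCount ρ 0 n ≤ (baseEdgeLink ρ n).ncard + 3) :
    vertexValency ρ 0 n ≤ (baseEdgeLink ρ n).ncard + 1 := by
  set u : G ⧸ parabolic ρ 1 n := ((1 : G) : G ⧸ parabolic ρ 1 n)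
  have hinv {i : ℕ} (hi : i < n) (x : G ⧸ parabolic ρ 1 n) : ρ i • ρ i • x = x :=
    h.smul_smul_self hi x
  rw [vertexValency_eq_ncard,
    ← Set.ncard_insert_of_notMem (h.smul_coe_one_notMem_baseEdgeLink hn h0)]
  refine Set.ncard_le_ncard ?_
  rintro _ ⟨g, hg, rfl⟩
  refine parabolic.smul_mem (fun k _ => h.mul_self k) ?_ hg (Set.mem_insert _ _)
  rintro k hk1 hkn x (rfl | hx)
  · rcases Nat.eq_or_lt_of_le hk1 with rfl | hk2
    · exact Or.inr ⟨1, one_mem _, one_smul _ _⟩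
    · exact Or.inl (h.smul_smul_coe_one hk2 hkn)
  rcases Nat.eq_or_lt_of_le hk1 with rfl | hk2
  · by_cases hxa : ρ 1 • x = ρ 0 • u
    · exact Or.inl hxa
    have hxu : ρ 1 • x ≠ u := fun hxu => by
      have hone : ρ 1 • u = u := smul_coe_one_of_mem (parabolic.generator_mem le_rfl hkn)
      have hx1 : x = u := by rw [← hinv hkn x, hxu, hone]
      exact h.coe_one_notMem_baseEdgeLink hn h0 (by rwa [hx1] at hx)
    have hbraid := h.smul_braid (i := 0) hn h0 x
    rw [zero_add, h.smul_eq_of_mem_baseEdgeLink hn h0 hx,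
      h.smul_eq_of_vertexCount_le hn h0 hv hxu hxa, hinv hkn] at hbraid
    exact Or.inr (by rwa [hbraid])
  · obtain ⟨g, hg, rfl⟩ := hx
    exact Or.inr ⟨ρ k * g, mul_mem (parabolic.generator_mem hk2 hkn) hg, mul_smul _ _ _⟩

theorem vertexCount_ne_seven [Finite G] (h : IsNonflatStringCGroup ρ 4) (h0 : schlafli ρ 0 = 3)
    (h2 : schlafli ρ 2 = 4) (hv1 : vertexCount ρ 1 4 = 6) : vertexCount ρ 0 4 ≠ 7 := by
  intro hv
  have hval0 : vertexValency ρ 0 4 = 6 := by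
    have hdvd := h.vertexValency_dvd (i := 0) (j := 4) (by omega) le_rfl
    have hle := h.le_vertexValency (i := 0) 4 (by omega)
    simp only [zero_add, hv1] at hdvd hle
    have := Nat.le_of_dvd (by norm_num) hdvd
    interval_cases vertexValency ρ 0 4 <;> omega
  have hval1 : vertexValency ρ 1 4 = 4 := by
    have hdvd := h.vertexValency_dvd (i := 1) (j := 4) (by omega) le_rfl
    have hle := h.le_vertexValency (i := 1) 3 (by omega)
    simp only [Nat.reduceAdd, h.vertexCount_add_two (i := 2) (by omega), h2] at hdvd hle
    have := Nat.le_of_dvd (by norm_num) hdvd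
    interval_cases vertexValency ρ 1 4 <;> omega
  have hlink := h.ncard_baseEdgeLink (by omega) (hval0.trans hv1.symm)
  have := h.vertexValency_le_of_vertexCount_le (by omega) h0 (by omega)
  omega

end IsNonflatStringCGroup

/-! ### Numerical data of sections -/

/-- The numerical data of a section of rank at least two, recording recursively those of its
facets and vertex-figures. A polygon is given by its number of vertices; a section of higher rank
by the data of its facets and of its vertex-figures, its numbers `v` of vertices and `f` of facets,
its vertex valency `d` and its facet valency `e`. -/
inductive SectionData
  | polygon (p : ℕ)
  | extend (facet vertexFigure : SectionData) (v f d e : ℕ)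
  deriving DecidableEq

namespace SectionData

/-- The rank of the section. -/
def rank : SectionData → ℕ
  | polygon _ => 2
  | extend k _ _ _ _ _ => k.rank + 1

/-- The first entry of the Schläfli symbol. -/
def firstEntry : SectionData → ℕ
  | polygon p => p
  | extend k _ _ _ _ _ => k.firstEntry

/-- The last entry of the Schläfli symbol. -/
def lastEntry : SectionData → ℕ
  | polygon p => p
  | extend _ w _ _ _ _ => w.lastEntry

/-- The number of vertices. -/
def vertices : SectionData → ℕ
  | polygon p => p
  | extend _ _ v _ _ _ => v

/-- The number of facets. -/
def facets : SectionData → ℕ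
  | polygon p => p
  | extend _ _ _ f _ _ => f

/-- The vertex valency, which is `2` in a polygon. -/
def valency : SectionData → ℕ
  | polygon _ => 2
  | extend _ _ _ _ d _ => d

/-- Half of the number of flags, which avoids a division when starting from polygons. -/
def halfFlags : SectionData → ℕ
  | polygon p => p
  | extend _ w v _ _ _ => v * w.halfFlags

/-- The data of the dual section. -/
def dual : SectionData → SectionData
  | polygon p => polygon p
  | extend k w v f d e => extend w.dual k.dual f v e d

/-- The compatibility of the facets `k` and the vertex-figures `w` of a section: the
vertex-figures of `k` are the facets of `w`. -/
def Linked : SectionData → SectionData → Prop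
  | polygon _, polygon _ => True
  | extend _ w _ _ _ _, extend k _ _ _ _ _ => w = k
  | _, _ => False

instance : DecidableRel Linked
  | polygon _, polygon _ => inferInstanceAs (Decidable True)
  | extend _ w _ _ _ _, extend k _ _ _ _ _ => inferInstanceAs (Decidable (w = k))
  | polygon _, extend .. => inferInstanceAs (Decidable False)
  | extend .., polygon _ => inferInstanceAs (Decidable False)

/-- The restrictions on the number `v` of vertices and the vertex valency `d` of a section with
facets `k` and vertex-figures `w`; the dual restrictions apply to facets. -/
def VertexConstraints (k w : SectionData) (v d : ℕ) : Prop :=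
  d ∣ w.vertices ∧ k.valency < d ∧ d < v ∧ k.vertices < v ∧ 2 ∣ v * d ∧
    (k.firstEntry = 3 ∧ w.vertices = k.rank + 1 → v = k.rank + 2) ∧
    (k.rank = 2 ∧ k.firstEntry = 4 ∧ w.lastEntry = 4 → 7 ≤ v) ∧
    (k.rank = 3 ∧ k.firstEntry = 3 ∧ w.lastEntry = 4 ∧ w.vertices = 6 → v ≠ 7)

instance (k w : SectionData) (v d : ℕ) : Decidable (VertexConstraints k w v d) := by
  unfold VertexConstraints; infer_instance

/-- All data of sections with facets and vertex-figures in `l`, subject to the restrictions of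
`VertexConstraints` and their duals, with at most `2 * b` flags. -/
def extensions (l : List SectionData) (b : ℕ) : List SectionData :=
  l.flatMap fun k ↦ (l.filter (Linked k)).flatMap fun w ↦
    ((List.range (b / w.halfFlags + 1)).filter (k.halfFlags ∣ · * w.halfFlags)).flatMap fun v ↦
      let f := v * w.halfFlags / k.halfFlags
      ((List.range v).filter (VertexConstraints k w v)).flatMap fun d ↦
        ((List.range f).filter (VertexConstraints w.dual k.dual f)).map (extend k w v f d)

theorem extend_mem_extensions {l : List SectionData} {b : ℕ} {k w : SectionData} {v f d e : ℕ}
    (hk : k ∈ l) (hw : w ∈ l) (hkw : Linked k w) (hk0 : 0 < k.halfFlags) (hw0 : 0 < w.halfFlags)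
    (hN : v * w.halfFlags = f * k.halfFlags) (hb : v * w.halfFlags ≤ b)
    (hv : VertexConstraints k w v d) (hf : VertexConstraints w.dual k.dual f e) :
    extend k w v f d e ∈ extensions l b := by
  have hdiv : v * w.halfFlags / k.halfFlags = f := by rw [hN, Nat.mul_div_cancel _ hk0]
  simp only [extensions, List.mem_flatMap, List.mem_filter, List.mem_map, List.mem_range,
    decide_eq_true_eq]
  refine ⟨k, hk, w, ⟨hw, hkw⟩, v, ⟨Nat.lt_succ_of_le ((Nat.le_div_iff_mul_le hw0).2 hb), f, ?_⟩,
    d, ⟨hv.2.2.1, hv⟩, e, ⟨?_, ?_⟩, ?_⟩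
  · rw [hN, mul_comm]
  all_goals rw [hdiv]
  exacts [hf.2.2.1, hf]

/-- Every section of rank three is of type `{3,3}` with `4` vertices, `{3,6}` with `4` vertices or
`{6,3}` with `8` vertices. In these the cubes of products of two adjacent generators are
central. -/
def IsTame : SectionData → Prop
  | polygon _ => True
  | extend k w v _ _ _ => k.IsTame ∧ w.IsTame ∧
      (k.rank = 2 → (k.firstEntry, w.lastEntry, v) ∈ [(3, 3, 4), (3, 6, 4), (6, 3, 8)])

instance : DecidablePred IsTame
  | polygon _ => inferInstanceAs (Decidable True)
  | extend k w v _ _ _ =>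
    have := instDecidablePredIsTame k
    have := instDecidablePredIsTame w
    inferInstanceAs (Decidable (k.IsTame ∧ w.IsTame ∧
      (k.rank = 2 → (k.firstEntry, w.lastEntry, v) ∈ [(3, 3, 4), (3, 6, 4), (6, 3, 8)])))

/-- Candidates for the sections of rank two of a section of rank five with at least seven vertices,
at least seven facets and less than `3840` flags. In `polygons`, `polyhedra` and `fourPolytopes` the
bounds on half the number of flags are `1919`, divided successively by `7`, `5` and `4`. -/
def polygons : List SectionData := (List.range' 3 11).map polygon

/-- Candidates for the sections of rank three. -/
def polyhedra : List SectionData := extensions polygons 54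

/-- Candidates for the sections of rank four. -/
def fourPolytopes : List SectionData := extensions polyhedra 274

theorem isTame_of_mem_extensions_fourPolytopes : ∀ x ∈ extensions fourPolytopes 1919,
    7 ≤ x.vertices → 7 ≤ x.facets → 2 * x.firstEntry * x.lastEntry ∣ x.halfFlags → x.IsTame := by
  decide +kernel

end SectionData

section SectionDataOfGenerators

variable {G : Type*} [Group G] (ρ : ℕ → G)

/-- The numerical data of the section of rank `m + 2` with group `⟨ρᵢ, …, ρᵢ₊ₘ₊₁⟩`. -/
noncomputable def sectionData : ℕ → ℕ → SectionData
  | i, 0 => .polygon (schlafli ρ i)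
  | i, m + 1 => .extend (sectionData i m) (sectionData (i + 1) m)
      (vertexCount ρ i (i + m + 3)) (facetCount ρ i (i + m + 3))
      (vertexValency ρ i (i + m + 3)) (facetValency ρ i (i + m + 3))

theorem rank_sectionData (i m : ℕ) : (sectionData ρ i m).rank = m + 2 := by
  induction m generalizing i with
  | zero => rfl
  | succ m ih => rw [sectionData, SectionData.rank, ih]

theorem firstEntry_sectionData (i m : ℕ) : (sectionData ρ i m).firstEntry = schlafli ρ i := by
  induction m with
  | zero => rfl
  | succ m ih => rw [sectionData, SectionData.firstEntry, ih]

theorem lastEntry_sectionData (i m : ℕ) :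
    (sectionData ρ i m).lastEntry = schlafli ρ (i + m) := by
  induction m generalizing i with
  | zero => rfl
  | succ m ih => rw [sectionData, SectionData.lastEntry, ih, add_right_comm, add_assoc]

theorem linked_sectionData (i m : ℕ) :
    SectionData.Linked (sectionData ρ i m) (sectionData ρ (i + 1) m) := by
  cases m <;> simp [sectionData, SectionData.Linked]

theorem schlafli_reverse {n i : ℕ} (hρ : ∀ k < n, (ρ k)⁻¹ = ρ k) (hi : i + 1 < n) :
    schlafli (reverseGenerators ρ n) i = schlafli ρ (n - (i + 2)) := by
  rw [schlafli, schlafli, ← orderOf_inv, mul_inv_rev, reverseGenerators, reverseGenerators,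
    hρ _ (by omega), hρ _ (by omega), show n - 1 - (i + 1) = n - (i + 2) by omega,
    show n - 1 - i = n - (i + 2) + 1 by omega]

theorem facetCount_reverse {n i j : ℕ} (hj : j ≤ n) (hij : i < j) :
    facetCount (reverseGenerators ρ n) i j = vertexCount ρ (n - j) (n - i) := by
  rw [vertexCount, facetCount, parabolic_reverse _ hj, parabolic_reverse _ (by omega),
    show n - (j - 1) = n - j + 1 by omega]

theorem facetValency_reverse {n i j : ℕ} (hj : j ≤ n) (hij : i < j) :
    facetValency (reverseGenerators ρ n) i j = vertexValency ρ (n - j) (n - i) := by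
  rw [vertexValency, facetValency, parabolic_reverse _ (by omega), reverseGenerators,
    show n - (j - 1) = n - j + 1 by omega, show n - 1 - (j - 1) = n - j by omega]

theorem sectionData_reverse {n : ℕ} (hρ : ∀ k < n, (ρ k)⁻¹ = ρ k) {i m : ℕ}
    (hm : i + m + 2 ≤ n) : sectionData (reverseGenerators ρ n) i m =
      (sectionData ρ (n - (i + m + 2)) m).dual := by
  induction m generalizing i with
  | zero => rw [sectionData, sectionData, schlafli_reverse ρ hρ (by omega)]; rfl
  | succ m ih =>
    have hright : n - (i + m + 3) + m + 3 = n - i := by omega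
    simp only [sectionData, SectionData.dual]
    rw [ih (by omega), ih (by omega), vertexCount_reverse _ (by omega),
      vertexValency_reverse _ (by omega), facetCount_reverse _ (by omega) (by omega),
      facetValency_reverse _ (by omega) (by omega), show i + (m + 1) + 2 = i + m + 3 by ring,
      hright, show n - (i + m + 2) = n - (i + m + 3) + 1 by omega,
      show n - (i + 1 + m + 2) = n - (i + m + 3) by omega]

end SectionDataOfGenerators

namespace IsNonflatStringCGroup

variable {G : Type*} [Group G] {ρ : ℕ → G} {n : ℕ}

theorem vertices_sectionData (h : IsNonflatStringCGroup ρ n) {i m : ℕ} (hm : i + m + 2 ≤ n) :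
    (sectionData ρ i m).vertices = vertexCount ρ i (i + m + 2) := by
  cases m with
  | zero => exact (h.vertexCount_add_two (by omega)).symm
  | succ m => rfl

theorem valency_sectionData_lt [Finite G] (h : IsNonflatStringCGroup ρ n) {i m : ℕ}
    (hm : i + m + 3 ≤ n) : (sectionData ρ i m).valency < vertexValency ρ i (i + m + 3) := by
  cases m with
  | zero => exact h.le_vertexValency 3 hm
  | succ m => exact h.vertexValency_lt_add_one (by omega) (by omega)

theorem two_mul_halfFlags_sectionData (h : IsNonflatStringCGroup ρ n) {i m : ℕ}
    (hm : i + m + 2 ≤ n) : 2 * (sectionData ρ i m).halfFlags = flagCount ρ i (i + m + 2) := by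
  induction m generalizing i with
  | zero => exact (h.flagCount_add_two (by omega)).symm
  | succ m ih =>
    rw [sectionData, SectionData.halfFlags, mul_left_comm, ih (by omega),
      show i + 1 + m + 2 = i + m + 3 by ring, vertexCount_mul_flagCount]
    rfl

theorem vertexCount_eq_of_schlafli_eq_three [Finite G] (h : IsNonflatStringCGroup ρ n) {i m : ℕ}
    (hm : i + m + 3 ≤ n) (h3 : schlafli ρ i = 3)
    (hv : vertexCount ρ (i + 1) (i + m + 3) = m + 3) : vertexCount ρ i (i + m + 3) = m + 4 := by
  have h' := h.restrict (a := i) (m := m + 2 + 1) (by omega) hm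
  have hcube : generatorCube (restrictGenerators ρ i (i + (m + 2 + 1))) 0 = 1 :=
    generatorCube_eq_one (by rwa [schlafli_restrict ρ (by omega)])
  have := h'.vertexCount_eq_add_two_of_braid (by omega) (h'.braid (by omega) hcube)
    (by rwa [vertexCount_restrict ρ 1 le_rfl])
  rwa [vertexCount_restrict ρ 0 le_rfl] at this

theorem vertexConstraints_sectionData [Finite G] (h : IsNonflatStringCGroup ρ n) {i m : ℕ}
    (hm : i + m + 3 ≤ n) : SectionData.VertexConstraints (sectionData ρ i m)
      (sectionData ρ (i + 1) m) (vertexCount ρ i (i + m + 3)) (vertexValency ρ i (i + m + 3)) := by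
  rw [SectionData.VertexConstraints, h.vertices_sectionData (by omega),
    h.vertices_sectionData (by omega), firstEntry_sectionData, lastEntry_sectionData,
    rank_sectionData, show i + 1 + m + 2 = i + m + 3 by ring]
  refine ⟨h.vertexValency_dvd (by omega) hm, h.valency_sectionData_lt hm,
    h.vertexValency_lt_vertexCount (by omega) hm, h.vertexCount_lt_add_one (by omega) (by omega),
    h.two_dvd_vertexCount_mul_vertexValency (by omega) hm,
    fun ⟨h3, hv⟩ => h.vertexCount_eq_of_schlafli_eq_three hm h3 hv, ?_, ?_⟩
  · rintro ⟨hm2, h0, h1⟩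
    obtain rfl : m = 0 := by omega
    have := (h.restrict (a := i) (by omega) hm).seven_le_vertexCount
      (by rwa [schlafli_restrict ρ (by omega)]) (by rwa [schlafli_restrict ρ (by omega)])
    rwa [vertexCount_restrict ρ 0 le_rfl] at this
  · rintro ⟨hm3, h0, h2, hv⟩
    obtain rfl : m = 1 := by omega
    have := (h.restrict (a := i) (by omega) hm).vertexCount_ne_seven
      (by rwa [schlafli_restrict ρ (by omega)]) (by rwa [schlafli_restrict ρ (by omega)])
      (by rwa [vertexCount_restrict ρ 1 le_rfl])
    rwa [vertexCount_restrict ρ 0 le_rfl] at this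

theorem dual_vertexConstraints_sectionData [Finite G] (h : IsNonflatStringCGroup ρ n) {i m : ℕ}
    (hm : i + m + 3 ≤ n) : SectionData.VertexConstraints (sectionData ρ (i + 1) m).dual
      (sectionData ρ i m).dual (facetCount ρ i (i + m + 3)) (facetValency ρ i (i + m + 3)) := by
  have hρ : ∀ k < n, (ρ k)⁻¹ = ρ k := fun k hk => h.inv_eq hk
  have := h.dual.vertexConstraints_sectionData (i := n - (i + m + 3)) (m := m) (by omega)
  rwa [sectionData_reverse ρ hρ (by omega), sectionData_reverse ρ hρ (by omega),
    vertexCount_reverse _ (by omega), vertexValency_reverse _ (by omega),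
    show n - (n - (i + m + 3) + m + 2) = i + 1 by omega,
    show n - (n - (i + m + 3) + 1 + m + 2) = i by omega,
    show n - (n - (i + m + 3) + m + 3) = i by omega,
    show n - (n - (i + m + 3)) = i + m + 3 by omega] at this

theorem sectionData_mem_extensions [Finite G] (h : IsNonflatStringCGroup ρ n)
    {l : List SectionData} {b i m : ℕ} (hm : i + m + 3 ≤ n) (hk : sectionData ρ i m ∈ l)
    (hw : sectionData ρ (i + 1) m ∈ l) (hb : flagCount ρ i (i + m + 3) < 2 * (b + 1)) :
    sectionData ρ i (m + 1) ∈ SectionData.extensions l b := by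
  have hk_half := h.two_mul_halfFlags_sectionData (i := i) (m := m) (by omega)
  have hw_half := h.two_mul_halfFlags_sectionData (i := i + 1) (m := m) (by omega)
  have hpos (i j : ℕ) : 0 < flagCount ρ i j := Nat.card_pos
  have hk0 := hpos i (i + m + 2)
  have hw0 := hpos (i + 1) (i + 1 + m + 2)
  have hv := vertexCount_mul_flagCount ρ i (i + m + 3)
  have hright : i + m + 3 = i + 1 + m + 2 := by ring
  refine SectionData.extend_mem_extensions hk hw (linked_sectionData ρ i m) (by omega) (by omega)
    ?_ ?_ (h.vertexConstraints_sectionData hm) (h.dual_vertexConstraints_sectionData hm)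
  · rw [← facetCount_mul_flagCount ρ i (i + m + 2), ← hk_half, hright, ← hw_half] at hv
    rw [hright]
    linarith
  · rw [← hv, hright, ← hw_half] at hb
    rw [hright]
    linarith

end IsNonflatStringCGroup

/-! ### Central cubes -/

section CentralCubes

variable {G : Type*} [Group G] {ρ : ℕ → G}

/-- The cubes of products of two adjacent generators are central in `⟨ρₐ, …, ρ_{b-1}⟩`. -/
def HasCentralCubes (ρ : ℕ → G) (a b : ℕ) : Prop :=
  ∀ i k, a ≤ i → i + 1 < b → a ≤ k → k < b → Commute (ρ k) (generatorCube ρ i)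

namespace HasCentralCubes

theorem of_restrict {a m : ℕ} (h : HasCentralCubes (restrictGenerators ρ a (a + m)) 0 m) :
    HasCentralCubes ρ a (a + m) := by
  intro i k hai him hak hkm
  obtain ⟨i, rfl⟩ := Nat.exists_eq_add_of_le hai
  obtain ⟨k, rfl⟩ := Nat.exists_eq_add_of_le hak
  have := (h i k i.zero_le (by omega) k.zero_le (by omega)).map (parabolic ρ a (a + m)).subtype
  rwa [Subgroup.subtype_apply, Subgroup.subtype_apply, coe_restrict ρ (by omega),
    coe_generatorCube_restrict ρ (by omega)] at this

theorem of_reverse {n : ℕ} (hρ : ∀ k < n, (ρ k)⁻¹ = ρ k)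
    (h : HasCentralCubes (reverseGenerators ρ n) 0 n) : HasCentralCubes ρ 0 n := by
  intro i k _ hi _ hk
  have hcube : generatorCube (reverseGenerators ρ n) (n - (i + 2)) = (generatorCube ρ i)⁻¹ := by
    rw [generatorCube, generatorCube, ← inv_pow, mul_inv_rev, hρ _ hi, hρ _ (by omega),
      reverseGenerators, reverseGenerators, show n - 1 - (n - (i + 2)) = i + 1 by omega,
      show n - 1 - (n - (i + 2) + 1) = i by omega]
  have := h (n - (i + 2)) (n - 1 - k) (by omega) (by omega) (by omega) (by omega)
  rwa [hcube, Commute.inv_right_iff, reverseGenerators, show n - 1 - (n - 1 - k) = k by omega]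
    at this

theorem mem_center {n i : ℕ} (h : HasCentralCubes ρ 0 n) (htop : parabolic ρ 0 n = ⊤)
    (hi : i + 1 < n) : generatorCube ρ i ∈ Subgroup.center G :=
  Subgroup.mem_center_iff.2 fun g => ((parabolic.commute_of_mem
    (fun k hk hkn => (h i k i.zero_le hi hk hkn).symm) (htop ▸ Subgroup.mem_top g)).symm).eq

end HasCentralCubes

end CentralCubes

namespace IsNonflatStringCGroup

section RankFive

variable {G : Type*} [Group G] {ρ : ℕ → G} {n : ℕ}

theorem flagCount_mul_flagCount_dvd (h : IsNonflatStringCGroup ρ n) {i j k l : ℕ} (hij : i ≤ j)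
    (hjk : j < k) (hkl : k ≤ l) (hl : l ≤ n) :
    flagCount ρ i j * flagCount ρ k l ∣ flagCount ρ i l := by
  let ψ := MonoidHom.noncommCoprod (parabolic ρ i j).subtype (parabolic ρ k l).subtype
    fun x y => parabolic.commute_of_mem (fun a ha hal => (h.commute_of_mem_parabolic (by omega)
      (by omega) (Or.inr (by omega)) x.2).symm) y.2
  have hψ : Function.Injective ψ := by
    refine (MonoidHom.noncommCoprod_injective _ _ _).2
      ⟨Subgroup.subtype_injective _, Subgroup.subtype_injective _, ?_⟩
    rw [Subgroup.range_subtype, Subgroup.range_subtype, disjoint_iff,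
      h.parabolic_inf _ _ _ _ (by omega) hl, parabolic.eq_bot (by omega)]
  have hrange : ψ.range ≤ parabolic ρ i l := by
    rintro _ ⟨⟨x, y⟩, rfl⟩
    exact mul_mem (parabolic.mono le_rfl (by omega) x.2) (parabolic.mono (by omega) le_rfl y.2)
  have := Subgroup.card_dvd_of_le hrange
  rwa [← Nat.card_congr (MonoidHom.ofInjective hψ).toEquiv, Nat.card_prod] at this

theorem hasCentralCubes_of_vertexCount_eq_four [Finite G] (h : IsNonflatStringCGroup ρ 3)
    (hv : vertexCount ρ 0 3 = 4) (hN : flagCount ρ 0 3 = 48) : HasCentralCubes ρ 0 3 :=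
  fun _ _ _ hi _ _ => h.commute_generatorCube_of_flagCount_eq_two_mul hv hN hi _

theorem hasCentralCubes_of_rank_three [Finite G] (h : IsNonflatStringCGroup ρ 3)
    (htype : (schlafli ρ 0, schlafli ρ 1, vertexCount ρ 0 3) ∈
      [(3, 3, 4), (3, 6, 4), (6, 3, 8)]) : HasCentralCubes ρ 0 3 := by
  have hv := vertexCount_mul_flagCount ρ 0 3
  have hf : facetCount ρ 0 3 * flagCount ρ 0 2 = flagCount ρ 0 3 := facetCount_mul_flagCount ρ 0 2
  rw [h.flagCount_add_two (by omega)] at hv hf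
  simp only [List.mem_cons, Prod.mk.injEq, List.not_mem_nil, or_false] at htype
  rcases htype with ⟨hp, hq, -⟩ | ⟨-, hq, hv4⟩ | ⟨hp, hq, hv8⟩
  · rintro i k - hi - -
    obtain rfl | rfl : i = 0 ∨ i = 1 := by omega
    · exact generatorCube_eq_one hp ▸ Commute.one_right _
    · exact generatorCube_eq_one hq ▸ Commute.one_right _
  · exact h.hasCentralCubes_of_vertexCount_eq_four hv4 (by rw [← hv, hq, hv4])
  · have hN : flagCount ρ 0 3 = 48 := by rw [← hv, hq, hv8]
    rw [hp, hN] at hf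
    have hf4 : facetCount ρ 0 3 = 4 := by omega
    refine .of_reverse (fun k hk => h.inv_eq hk)
      (h.dual.hasCentralCubes_of_vertexCount_eq_four ?_ ?_)
    · rwa [vertexCount_reverse ρ le_rfl]
    · rwa [flagCount_reverse ρ le_rfl]

theorem hasCentralCubes_of_isTame [Finite G] (h : IsNonflatStringCGroup ρ n) {a : ℕ}
    (ha : a + 3 ≤ n) (ht : (sectionData ρ a 1).IsTame) : HasCentralCubes ρ a (a + 3) := by
  refine .of_restrict ((h.restrict (by omega) ha).hasCentralCubes_of_rank_three ?_)
  rw [schlafli_restrict ρ (by omega), schlafli_restrict ρ (by omega),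
    vertexCount_restrict ρ 0 le_rfl]
  exact ht.2.2 rfl

theorem hasCentralCubes_of_windows (h : IsNonflatStringCGroup ρ n) {m : ℕ} (hm : 3 ≤ m)
    (hmn : m ≤ n) (hw : ∀ a, a + m ≤ n → HasCentralCubes ρ a (a + m)) :
    HasCentralCubes ρ 0 n := by
  intro i k _ hi _ hk
  by_cases hki : k + 1 < i ∨ i + 2 < k
  · exact h.commute_generatorCube_of_lt_or_lt hi hk hki
  · exact hw (min (min i k) (n - m)) (by omega) i k (by omega) (by omega) (by omega) (by omega)

theorem add_two_mul_flagCount_le_right [Finite G] (h : IsNonflatStringCGroup ρ n) {i m : ℕ}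
    (hm : i + m + 1 ≤ n) : (m + 2) * flagCount ρ i (i + m) ≤ flagCount ρ i (i + m + 1) :=
  facetCount_mul_flagCount ρ i (i + m) ▸
    Nat.mul_le_mul_right _ (h.add_one_le_facetCount (m + 1) hm)

theorem add_two_mul_flagCount_le_left [Finite G] (h : IsNonflatStringCGroup ρ n) {i m : ℕ}
    (hm : i + m + 1 ≤ n) :
    (m + 2) * flagCount ρ (i + 1) (i + m + 1) ≤ flagCount ρ i (i + m + 1) :=
  vertexCount_mul_flagCount ρ i (i + m + 1) ▸
    Nat.mul_le_mul_right _ (h.add_one_le_vertexCount (m + 1) hm)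

theorem sectionData_mem_polygons [Finite G] (h : IsNonflatStringCGroup ρ n) {i : ℕ}
    (hi : i + 1 < n) (hN : flagCount ρ i (i + 2) < 28) :
    sectionData ρ i 0 ∈ SectionData.polygons := by
  rw [h.flagCount_add_two hi] at hN
  have := h.three_le_schlafli hi
  exact List.mem_map_of_mem (List.mem_range'_1.2 ⟨this, by omega⟩)

theorem sectionData_mem_polyhedra [Finite G] (h : IsNonflatStringCGroup ρ n) {i : ℕ}
    (hi : i + 3 ≤ n) (hN : flagCount ρ i (i + 3) < 110) :
    sectionData ρ i 1 ∈ SectionData.polyhedra := by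
  have hk : 4 * flagCount ρ i (i + 2) ≤ flagCount ρ i (i + 3) := h.add_two_mul_flagCount_le_right hi
  have hw : 4 * flagCount ρ (i + 1) (i + 1 + 2) ≤ flagCount ρ i (i + 3) :=
    h.add_two_mul_flagCount_le_left (m := 2) hi
  exact h.sectionData_mem_extensions hi (h.sectionData_mem_polygons (by omega) (by omega))
    (h.sectionData_mem_polygons (by omega) (by omega)) hN

theorem sectionData_mem_fourPolytopes [Finite G] (h : IsNonflatStringCGroup ρ n) {i : ℕ}
    (hi : i + 4 ≤ n) (hN : flagCount ρ i (i + 4) < 550) :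
    sectionData ρ i 2 ∈ SectionData.fourPolytopes := by
  have hk : 5 * flagCount ρ i (i + 3) ≤ flagCount ρ i (i + 4) := h.add_two_mul_flagCount_le_right hi
  have hw : 5 * flagCount ρ (i + 1) (i + 1 + 3) ≤ flagCount ρ i (i + 4) :=
    h.add_two_mul_flagCount_le_left (m := 3) hi
  exact h.sectionData_mem_extensions hi (h.sectionData_mem_polyhedra (by omega) (by omega))
    (h.sectionData_mem_polyhedra (by omega) (by omega)) hN

theorem isTame_sectionData [Finite G] (h : IsNonflatStringCGroup ρ 5)
    (hN : flagCount ρ 0 5 < 3840) (hv : 7 ≤ vertexCount ρ 0 5) (hf : 7 ≤ facetCount ρ 0 5) :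
    (sectionData ρ 0 3).IsTame := by
  have hk : 7 * flagCount ρ 0 4 ≤ flagCount ρ 0 5 :=
    facetCount_mul_flagCount ρ 0 4 ▸ Nat.mul_le_mul_right _ hf
  have hw : 7 * flagCount ρ 1 5 ≤ flagCount ρ 0 5 :=
    vertexCount_mul_flagCount ρ 0 5 ▸ Nat.mul_le_mul_right _ hv
  have hk4 : flagCount ρ 0 (0 + 4) < 550 := by rw [zero_add]; omega
  have hw4 : flagCount ρ 1 (1 + 4) < 550 := by change flagCount ρ 1 5 < 550; omega
  have hhalf : 2 * (sectionData ρ 0 3).halfFlags = flagCount ρ 0 5 :=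
    h.two_mul_halfFlags_sectionData le_rfl
  have hdvd : flagCount ρ 0 2 * flagCount ρ 3 5 ∣ flagCount ρ 0 5 :=
    h.flagCount_mul_flagCount_dvd (by omega) (by omega) (by omega) le_rfl
  rw [h.flagCount_add_two (by omega), h.flagCount_add_two (by omega), ← hhalf, mul_assoc] at hdvd
  refine SectionData.isTame_of_mem_extensions_fourPolytopes _ (h.sectionData_mem_extensions le_rfl
    (h.sectionData_mem_fourPolytopes (by omega) hk4)
    (h.sectionData_mem_fourPolytopes (by omega) hw4) hN) hv hf ?_
  rw [firstEntry_sectionData, lastEntry_sectionData, mul_assoc]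
  exact Nat.dvd_of_mul_dvd_mul_left two_pos (by rwa [mul_left_comm (schlafli ρ 0)] at hdvd)

theorem hasCentralCubes_of_vertexCount_eq_six [Finite G] (h : IsNonflatStringCGroup ρ 5)
    (hv : vertexCount ρ 0 5 = 6) (hN : flagCount ρ 0 5 < 3840) : HasCentralCubes ρ 0 5 :=
  fun _ _ _ hi _ hk =>
    h.commute_generatorCube_of_flagCount_lt le_rfl hv (hN.trans (by decide)) hi hk

theorem hasCentralCubes_of_flagCount_lt [Finite G] (h : IsNonflatStringCGroup ρ 5)
    (hN : flagCount ρ 0 5 < 3840) : HasCentralCubes ρ 0 5 := by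
  by_cases hv : vertexCount ρ 0 5 = 6
  · exact h.hasCentralCubes_of_vertexCount_eq_six hv hN
  by_cases hf : facetCount ρ 0 5 = 6
  · refine .of_reverse (fun k hk => h.inv_eq hk)
      (h.dual.hasCentralCubes_of_vertexCount_eq_six ?_ ?_)
    · rwa [vertexCount_reverse ρ le_rfl]
    · rwa [flagCount_reverse ρ le_rfl]
  have hv6 : 6 ≤ vertexCount ρ 0 5 := h.add_one_le_vertexCount 5 le_rfl
  have hf6 : 6 ≤ facetCount ρ 0 5 := h.add_one_le_facetCount 5 le_rfl
  obtain ⟨⟨h0, h1, -⟩, ⟨-, h2, -⟩, -⟩ := h.isTame_sectionData hN (by omega) (by omega)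
  refine h.hasCentralCubes_of_windows le_rfl (by omega) fun a ha => ?_
  obtain rfl | rfl | rfl : a = 0 ∨ a = 1 ∨ a = 2 := by omega
  exacts [h.hasCentralCubes_of_isTame ha h0, h.hasCentralCubes_of_isTame ha h1,
    h.hasCentralCubes_of_isTame ha h2]

end RankFive

section FlagBound

variable {G : Type*} [Group G] {ρ : ℕ → G} {n : ℕ}

theorem flagCount_mul_factorial_le_right [Finite G] (h : IsNonflatStringCGroup ρ n) {i m k : ℕ}
    (hk : i + m + k ≤ n) : flagCount ρ i (i + m) * (m + k + 1).factorial ≤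
      (m + 1).factorial * flagCount ρ i (i + m + k) := by
  induction k with
  | zero => exact (mul_comm _ _).le
  | succ k ih =>
    calc flagCount ρ i (i + m) * (m + k + 2).factorial
        = (m + k + 2) * (flagCount ρ i (i + m) * (m + k + 1).factorial) := by
          rw [Nat.factorial_succ, mul_left_comm]
      _ ≤ (m + k + 2) * ((m + 1).factorial * flagCount ρ i (i + (m + k))) := by
          rw [← add_assoc i]; exact Nat.mul_le_mul_left _ (ih (by omega))
      _ = (m + 1).factorial * ((m + k + 2) * flagCount ρ i (i + (m + k))) := mul_left_comm ..
      _ ≤ (m + 1).factorial * flagCount ρ i (i + (m + k) + 1) :=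
          Nat.mul_le_mul_left _ (h.add_two_mul_flagCount_le_right (by omega))
      _ = _ := by rw [← add_assoc i, ← add_assoc (i + m)]

theorem flagCount_mul_factorial_le [Finite G] (h : IsNonflatStringCGroup ρ n) {i l m k : ℕ}
    (hk : i + l + m + k ≤ n) : flagCount ρ (i + l) (i + l + m) * (m + k + l + 1).factorial ≤
      (m + 1).factorial * flagCount ρ i (i + l + m + k) := by
  induction l generalizing i with
  | zero => exact h.flagCount_mul_factorial_le_right hk
  | succ l ih =>
    have ih := ih (i := i + 1) (by omega)
    have hstep := h.add_two_mul_flagCount_le_left (i := i) (m := m + k + l) (by omega)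
    rw [show i + 1 + l = i + (l + 1) by ring] at ih
    rw [show i + (m + k + l) + 1 = i + (l + 1) + m + k by ring] at hstep
    calc flagCount ρ (i + (l + 1)) (i + (l + 1) + m) * (m + k + l + 2).factorial
        = (m + k + l + 2) *
            (flagCount ρ (i + (l + 1)) (i + (l + 1) + m) * (m + k + l + 1).factorial) := by
          rw [Nat.factorial_succ, mul_left_comm]
      _ ≤ (m + k + l + 2) * ((m + 1).factorial * flagCount ρ (i + 1) (i + (l + 1) + m + k)) :=
          Nat.mul_le_mul_left _ ih
      _ = (m + 1).factorial * ((m + k + l + 2) * flagCount ρ (i + 1) (i + (l + 1) + m + k)) :=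
          mul_left_comm ..
      _ ≤ _ := Nat.mul_le_mul_left _ hstep

theorem flagCount_add_five_lt [Finite G] (h : IsNonflatStringCGroup ρ n)
    (hN : 3 * flagCount ρ 0 n < 16 * (n + 1).factorial) {a : ℕ} (ha : a + 5 ≤ n) :
    flagCount ρ a (a + 5) < 3840 := by
  obtain ⟨k, rfl⟩ := Nat.exists_eq_add_of_le ha
  have hle : flagCount ρ a (a + 5) * (a + 5 + k + 1).factorial ≤
      720 * flagCount ρ 0 (a + 5 + k) := by
    have := h.flagCount_mul_factorial_le (i := 0) (l := a) (m := 5) (k := k) (by omega)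
    rwa [zero_add, show 5 + k + a + 1 = a + 5 + k + 1 by ring] at this
  refine lt_of_mul_lt_mul_right (a := (a + 5 + k + 1).factorial) ?_ (Nat.zero_le _)
  omega

theorem hasCentralCubes [Finite G] (h : IsNonflatStringCGroup ρ n) (hn : 5 ≤ n)
    (hN : 3 * flagCount ρ 0 n < 16 * (n + 1).factorial) : HasCentralCubes ρ 0 n :=
  h.hasCentralCubes_of_windows (m := 5) (by omega) hn fun a ha =>
    .of_restrict ((h.restrict (by omega) ha).hasCentralCubes_of_flagCount_lt (by
      rw [flagCount_restrict ρ 0 le_rfl]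
      exact h.flagCount_add_five_lt hN ha))

theorem vertexCount_eq_of_forall_schlafli_eq_three [Finite G] (h : IsNonflatStringCGroup ρ n)
    (hp : ∀ i, i + 1 < n → schlafli ρ i = 3) {i m : ℕ} (hm : i + m + 2 ≤ n) :
    vertexCount ρ i (i + m + 2) = m + 3 := by
  induction m generalizing i with
  | zero => rw [h.vertexCount_add_two (by omega), hp i (by omega)]
  | succ m ih =>
    have := ih (i := i + 1) (by omega)
    rw [show i + 1 + m + 2 = i + m + 3 by ring] at this
    exact h.vertexCount_eq_of_schlafli_eq_three hm (hp i (by omega)) this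

theorem flagCount_eq_factorial [Finite G] (h : IsNonflatStringCGroup ρ n)
    (hp : ∀ i, i + 1 < n → schlafli ρ i = 3) {i m : ℕ} (hm : i + m + 2 ≤ n) :
    flagCount ρ i (i + m + 2) = (m + 3).factorial := by
  induction m generalizing i with
  | zero => rw [h.flagCount_add_two (by omega), hp i (by omega)]; rfl
  | succ m ih =>
    rw [← vertexCount_mul_flagCount, Nat.factorial_succ, ← ih (i := i + 1) (by omega),
      show i + (m + 1) + 2 = i + 1 + m + 2 by ring,
      show i + 1 + m + 2 = i + (m + 1) + 2 by ring,
      h.vertexCount_eq_of_forall_schlafli_eq_three hp hm]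

theorem isTranspositionStabilizer_sup_center (h : IsNonflatStringCGroup ρ n)
    (hcube : HasCentralCubes ρ 0 n) :
    IsTranspositionStabilizer ρ n (parabolic ρ 1 n ⊔ Subgroup.center G) := by
  have hgen (i : ℕ) (h1 : 1 ≤ i) (hi : i < n) : ρ i ∈ parabolic ρ 1 n ⊔ Subgroup.center G :=
    Subgroup.mem_sup_left (parabolic.generator_mem h1 hi)
  refine ⟨hgen, fun j hj => ?_⟩
  have hz := hcube.mem_center h.parabolic_eq_top (i := j) (by omega)
  have hcomm : Commute (ρ (j + 1)) (descendingProd ρ 0 j) :=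
    h.commute_of_mem_parabolic (by omega) (by omega) (Or.inr (by omega))
      (descendingProd_mem_parabolic ρ 0 j)
  have hinner : ρ j * ρ (j + 1) * ρ j * ρ (j + 1) * ρ j = generatorCube ρ j * ρ (j + 1) := by
    simp only [generatorCube, pow_succ, pow_zero, one_mul, mul_assoc, h.mul_self (j + 1) (by omega),
      mul_one]
  have hconj : (descendingProd ρ 0 (j + 2))⁻¹ * ρ j * descendingProd ρ 0 (j + 2) =
      generatorCube ρ j * ρ (j + 1) := by
    calc (descendingProd ρ 0 (j + 2))⁻¹ * ρ j * descendingProd ρ 0 (j + 2)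
        = (descendingProd ρ 0 j)⁻¹ * (ρ j * ρ (j + 1) * ρ j * ρ (j + 1) * ρ j) *
            descendingProd ρ 0 j := by
          simp only [descendingProd, mul_inv_rev, zero_add, h.inv_eq (i := j) (by omega),
            h.inv_eq (i := j + 1) (by omega), mul_assoc]
      _ = (descendingProd ρ 0 j)⁻¹ * generatorCube ρ j *
            (ρ (j + 1) * descendingProd ρ 0 j) := by rw [hinner]; simp only [mul_assoc]
      _ = generatorCube ρ j * ρ (j + 1) := by
          rw [hcomm.eq, Subgroup.mem_center_iff.1 hz (descendingProd ρ 0 j)⁻¹, mul_assoc,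
            inv_mul_cancel_left]
  rw [hconj]
  exact mul_mem (Subgroup.mem_sup_right hz) (hgen (j + 1) (by omega) (by omega))

theorem generator_notMem_sup_center [Finite G] (h : IsNonflatStringCGroup ρ n) (hn : 2 ≤ n) :
    ρ 0 ∉ parabolic ρ 1 n ⊔ Subgroup.center G := by
  intro hmem
  obtain ⟨u, hu, z, hz, huz⟩ := Subgroup.mem_sup_of_normal_right.1 hmem
  have hconj : MulAut.conj (ρ 0) • parabolic ρ 1 n = parabolic ρ 1 n := by
    ext x
    have hzx : (ρ 0)⁻¹ * x * ρ 0 = u⁻¹ * x * u := by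
      rw [← huz, Subgroup.mem_center_iff.1 hz u, mul_assoc, ← mul_assoc x,
        Subgroup.mem_center_iff.1 hz x, mul_assoc z, mul_inv_rev, mul_assoc, inv_mul_cancel_left,
        mul_assoc]
    rw [mem_conj_smul_iff, hzx, Subgroup.mul_mem_cancel_right _ hu,
      Subgroup.mul_mem_cancel_left _ (inv_mem hu)]
  have hval : vertexValency ρ 0 (0 + n) = 1 := by
    rw [zero_add, vertexValency, hconj, Subgroup.relIndex_self]
  have := h.le_vertexValency (i := 0) n (by omega)
  omega

theorem schlafli_eq_three_of_card_ker_eq_five [Finite G] (h : IsNonflatStringCGroup ρ n)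
    (hcube : HasCentralCubes ρ 0 n) {φ : G →* Equiv.Perm (Fin (n + 1))}
    (hφ : ∀ i : Fin n, φ (ρ i) = Equiv.swap i.castSucc i.succ) (hker : Nat.card φ.ker = 5) {i : ℕ}
    (hi : i + 1 < n) : schlafli ρ i = 3 := by
  have hsq : generatorCube ρ i ^ 2 = 1 := by
    rw [pow_two, h.generatorCube_mul_self hi (hcube i i i.zero_le hi i.zero_le (by omega))]
  have hfive : orderOf (generatorCube ρ i) ∣ 5 :=
    hker ▸ Subgroup.orderOf_dvd_natCard φ.ker (generatorCube_mem_ker hφ hi)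
  have hone : generatorCube ρ i = 1 := orderOf_eq_one_iff.1
    (Nat.dvd_one.1 (Nat.dvd_gcd hfive (orderOf_dvd_of_pow_eq_one hsq)))
  exact le_antisymm (orderOf_le_of_pow_eq_one three_pos hone) (h.three_le_schlafli hi)

theorem sixteen_mul_factorial_le [Finite G] (h : IsNonflatStringCGroup ρ n) (hn : 5 ≤ n)
    (hN : 4 * (n + 1).factorial < Nat.card G) : 16 * (n + 1).factorial ≤ 3 * Nat.card G := by
  have hcard : flagCount ρ 0 n = Nat.card G := by
    rw [flagCount, h.parabolic_eq_top, Subgroup.card_top]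
  by_contra! hlt
  have hcube := h.hasCentralCubes hn (hcard ▸ hlt)
  obtain ⟨φ, hsurj, hφ⟩ := h.exists_surjective_perm (h.isTranspositionStabilizer_sup_center hcube)
    (h.generator_notMem_sup_center (by omega))
  have hfact : Nat.card G = (n + 1).factorial * Nat.card φ.ker := by
    rw [card_eq_factorial_mul_card_ker hsurj, Fintype.card_fin]
  have hpos := (n + 1).factorial_pos
  have hker : Nat.card φ.ker = 5 := by
    have : 4 < Nat.card φ.ker := by nlinarith
    have : Nat.card φ.ker < 6 := by nlinarith
    omega
  have hsymm := h.flagCount_eq_factorial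
    (fun i hi => h.schlafli_eq_three_of_card_ker_eq_five hcube hφ hker hi)
    (i := 0) (m := n - 2) (by omega)
  rw [show 0 + (n - 2) + 2 = n by omega, show n - 2 + 3 = n + 1 by omega, hcard] at hsymm
  omega

end FlagBound

end IsNonflatStringCGroup

/-! ### Automorphism groups of regular polytopes -/

namespace AbstractPolytope

section FlagSequences

variable {n : ℕ} (P : AbstractPolytope n) {F G x y z : P.Face}

theorem rank_monotone : Monotone P.rank := fun F G h =>
  h.eq_or_lt.elim (fun he => he ▸ le_rfl) fun hlt => (P.rank_strictMono F G hlt).le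

variable {P}

theorem neg_one_le_rank (F : P.Face) : -1 ≤ P.rank F := by
  simpa only [P.rank_bot] using P.rank_monotone (P.bot_le F)

theorem rank_le (F : P.Face) : P.rank F ≤ n := by
  simpa only [P.rank_top] using P.rank_monotone (P.le_top F)

theorem Incident.eq_of_rank_eq (h : P.Incident F G) (hr : P.rank F = P.rank G) : F = G := by
  rcases h with h | h <;> rcases h.eq_or_lt with he | hlt
  · exact he
  · exact absurd hr (P.rank_strictMono _ _ hlt).ne
  · exact he.symm
  · exact absurd hr (P.rank_strictMono _ _ hlt).ne'

theorem ncard_Ioo (hFG : F < G) (hr : P.rank G = P.rank F + 2) : (Set.Ioo F G).ncard = 2 :=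
  P.diamond F G hFG hr

theorem eq_of_mem_Ioo_of_ne (hr : P.rank G = P.rank F + 2) (hx : x ∈ Set.Ioo F G)
    (hy : y ∈ Set.Ioo F G) (hz : z ∈ Set.Ioo F G) (hyx : y ≠ x) (hzx : z ≠ x) : y = z := by
  obtain ⟨a, b, -, hab⟩ := Set.ncard_eq_two.1 (ncard_Ioo (hx.1.trans hx.2) hr)
  rw [hab, Set.mem_insert_iff, Set.mem_singleton_iff] at hx hy hz
  grind

theorem exists_mem_Ioo_ne (hr : P.rank G = P.rank F + 2) (hFG : F < G) (x : P.Face) :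
    ∃ y ∈ Set.Ioo F G, y ≠ x :=
  Set.exists_ne_of_one_lt_ncard (by rw [ncard_Ioo hFG hr]; exact one_lt_two) x

variable (P) in
/-- A flag written as a sequence: `c k` is its face of rank `k - 1`, and all faces from `c (n + 1)`
on are the greatest one. -/
structure IsFlagSeq (c : ℕ → P.Face) : Prop where
  monotone : Monotone c
  rank_eq : ∀ k, P.rank (c k) = (min k (n + 1) : ℕ) - 1

namespace IsFlagSeq

variable {c d : ℕ → P.Face}

theorem incident (h : P.IsFlagSeq c) (i j : ℕ) : P.Incident (c i) (c j) :=
  (le_total i j).imp (fun hij => h.monotone hij) fun hij => h.monotone hij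

theorem eq_of_rank_eq (h : P.IsFlagSeq c) (hx : x ∈ Set.range c) {k : ℕ}
    (hr : P.rank x = P.rank (c k)) : c k = x := by
  obtain ⟨i, rfl⟩ := hx
  exact (h.incident k i).eq_of_rank_eq hr.symm

theorem eq_of_range_subset (h : P.IsFlagSeq c) (h' : P.IsFlagSeq d)
    (hsub : Set.range c ⊆ Set.range d) : c = d :=
  funext fun k => (h'.eq_of_rank_eq (hsub ⟨k, rfl⟩) (by rw [h.rank_eq, h'.rank_eq])).symm

theorem apply_zero (h : P.IsFlagSeq c) : c 0 = P.bot :=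
  Incident.eq_of_rank_eq (Or.inr (P.bot_le _)) (by rw [P.rank_bot, h.rank_eq]; simp)

theorem apply_eq_top (h : P.IsFlagSeq c) {k : ℕ} (hk : n < k) : c k = P.top :=
  Incident.eq_of_rank_eq (Or.inl (P.le_top _)) (by rw [P.rank_top, h.rank_eq]; omega)

theorem apply_lt_apply (h : P.IsFlagSeq c) {i j : ℕ} (hij : i < j) (hi : i ≤ n) : c i < c j := by
  refine (h.monotone hij.le).lt_of_ne fun he => ?_
  have := congrArg P.rank he
  rw [h.rank_eq, h.rank_eq] at this
  omega

theorem rank_apply_add_two (h : P.IsFlagSeq c) {i : ℕ} (hi : i < n) :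
    P.rank (c (i + 2)) = P.rank (c i) + 2 := by
  rw [h.rank_eq, h.rank_eq]
  omega

theorem apply_add_one_mem_Ioo (h : P.IsFlagSeq c) {i : ℕ} (hi : i < n) :
    c (i + 1) ∈ Set.Ioo (c i) (c (i + 2)) :=
  ⟨h.apply_lt_apply (by omega) (by omega), h.apply_lt_apply (by omega) (by omega)⟩

theorem exists_rank_apply_eq (h : P.IsFlagSeq c) (F : P.Face) :
    ∃ k, P.rank F = P.rank (c k) := by
  have hlow := neg_one_le_rank F
  have hhigh := rank_le F
  refine ⟨(P.rank F + 1).toNat, ?_⟩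
  rw [h.rank_eq]
  omega

/-- The flag whose faces are the terms of a flag sequence. -/
def toFlag (h : P.IsFlagSeq c) : Flag P.Face where
  carrier := Set.range c
  Chain' := by
    rintro _ ⟨i, rfl⟩ _ ⟨j, rfl⟩ -
    exact h.incident i j
  max_chain' s hs hsub := by
    refine hsub.antisymm fun x hx => ?_
    obtain ⟨k, hk⟩ := h.exists_rank_apply_eq x
    exact ⟨k, Incident.eq_of_rank_eq (hs.total (hsub ⟨k, rfl⟩) hx) hk.symm⟩

theorem coe_toFlag (h : P.IsFlagSeq c) : (h.toFlag : Set P.Face) = Set.range c := rfl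

end IsFlagSeq

theorem exists_isFlagSeq_range_eq (Φ : Flag P.Face) :
    ∃ c, P.IsFlagSeq c ∧ Set.range c = (Φ : Set P.Face) := by
  have hex (k : ℕ) : ∃ F ∈ Φ, P.rank F = (min k (n + 1) : ℕ) - 1 :=
    P.flag_ranks Φ _ (by omega) (by omega)
  choose c hmem hrank using hex
  have hc : P.IsFlagSeq c := by
    refine ⟨fun i j hij => (Φ.le_or_le (hmem i) (hmem j)).elim id fun hle => ?_, hrank⟩
    have := P.rank_monotone hle
    rw [hrank, hrank] at this
    exact (Incident.eq_of_rank_eq (Or.inr hle) (by rw [hrank, hrank]; omega)).le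
  exact ⟨c, hc, hc.toFlag.max_chain' Φ.chain_le (Set.range_subset_iff.2 hmem)⟩

theorem exists_isFlagSeq_of_isChain {s : Set P.Face} (hs : IsChain (· ≤ ·) s) :
    ∃ c, P.IsFlagSeq c ∧ s ⊆ Set.range c := by
  obtain ⟨Φ, hΦ⟩ := hs.exists_subset_flag
  obtain ⟨c, hc, hrange⟩ := exists_isFlagSeq_range_eq Φ
  exact ⟨c, hc, hrange ▸ hΦ⟩

theorem exists_isFlagSeq_mem_range (F : P.Face) : ∃ c, P.IsFlagSeq c ∧ F ∈ Set.range c := by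
  obtain ⟨c, hc, hF⟩ := exists_isFlagSeq_of_isChain (Set.subsingleton_singleton (a := F)).isChain
  exact ⟨c, hc, hF rfl⟩

theorem rank_le_rank_smul (g : P.Face ≃o P.Face) (F : P.Face) : P.rank F ≤ P.rank (g • F) := by
  obtain ⟨c, hc, i, rfl⟩ := exists_isFlagSeq_mem_range F
  rw [hc.rank_eq]
  induction i with
  | zero => simpa using neg_one_le_rank (g • c 0)
  | succ i ih =>
    rcases lt_or_ge n i with hi | hi
    · rw [hc.apply_eq_top (by omega), ← hc.apply_eq_top hi]
      omega
    · have := P.rank_strictMono _ _ (g.lt_iff_lt.2 (hc.apply_lt_apply (j := i + 1) (by omega) hi))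
      rw [RelIso.smul_def] at ih ⊢
      omega

theorem rank_smul (g : P.Face ≃o P.Face) (F : P.Face) : P.rank (g • F) = P.rank F := by
  refine le_antisymm ?_ (rank_le_rank_smul g F)
  simpa only [inv_smul_smul] using rank_le_rank_smul g⁻¹ (g • F)

namespace IsFlagSeq

variable {c d : ℕ → P.Face}

theorem smul (h : P.IsFlagSeq c) (g : P.Face ≃o P.Face) : P.IsFlagSeq (g • c) where
  monotone i j hij := g.monotone (h.monotone hij)
  rank_eq k := by rw [Pi.smul_apply, rank_smul, h.rank_eq]

theorem exists_smul_eq (hreg : P.IsRegular) (hc : P.IsFlagSeq c) (hd : P.IsFlagSeq d) :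
    ∃ g : P.Face ≃o P.Face, g • c = d := by
  obtain ⟨g, hg⟩ := hreg hc.toFlag hd.toFlag
  refine ⟨g, (hc.smul g).eq_of_range_subset hd ?_⟩
  rw [← hd.coe_toFlag, ← hg, hc.coe_toFlag, ← Set.range_comp]
  exact subset_rfl

theorem exists_eqOn_compl_Ioc (h : P.IsFlagSeq c) {i j : ℕ}
    (hx : x ∈ Set.Ioo (c i) (c (j + 1))) (hy : y ∈ Set.Ioo (c i) (c (j + 1)))
    (hxy : P.Incident x y) :
    ∃ d, P.IsFlagSeq d ∧ Set.EqOn d c (Set.Ioc i j)ᶜ ∧ x ∈ Set.range d ∧ y ∈ Set.range d := by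
  have hinc (k : ℕ) (hk : k ∈ (Set.Ioc i j)ᶜ) (w : P.Face) (hw : w ∈ Set.Ioo (c i) (c (j + 1))) :
      P.Incident (c k) w := by
    rw [Set.mem_compl_iff, Set.mem_Ioc, not_and_or, not_lt, not_le] at hk
    exact hk.imp (fun hki => (h.monotone hki).trans hw.1.le)
      fun hjk => hw.2.le.trans (h.monotone hjk)
  have hchain : IsChain (· ≤ ·) (insert x (insert y (c '' (Set.Ioc i j)ᶜ))) := by
    refine IsChain.insert (IsChain.insert ?_ ?_) ?_
    · rintro _ ⟨k, -, rfl⟩ _ ⟨l, -, rfl⟩ -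
      exact h.incident k l
    · rintro _ ⟨k, hk, rfl⟩ -
      exact (hinc k hk y hy).symm
    · rintro _ (rfl | ⟨k, hk, rfl⟩) -
      · exact hxy
      · exact (hinc k hk x hx).symm
  obtain ⟨d, hd, hsub⟩ := exists_isFlagSeq_of_isChain hchain
  exact ⟨d, hd, fun k hk => hd.eq_of_rank_eq (hsub (Or.inr (Or.inr ⟨k, hk, rfl⟩)))
    (by rw [h.rank_eq, hd.rank_eq]), hsub (Or.inl rfl), hsub (Or.inr (Or.inl rfl))⟩

theorem piecewise (hc : P.IsFlagSeq c) (hd : P.IsFlagSeq d) {l : ℕ} (hl : d l = c l) :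
    P.IsFlagSeq ((Set.Iic l).piecewise d c) where
  monotone i j hij := by
    simp only [Set.piecewise, Set.mem_Iic]
    split_ifs with hi hj
    · exact hd.monotone hij
    · exact (hd.monotone hi).trans (hl.le.trans (hc.monotone (by omega)))
    · omega
    · exact hc.monotone hij
  rank_eq k := by
    simp only [Set.piecewise]
    split_ifs
    · exact hd.rank_eq k
    · exact hc.rank_eq k

end IsFlagSeq

/-- Two flag sequences are `i`-adjacent if they differ exactly in their faces of rank `i`. -/
def IsAdjacentAt (i : ℕ) (c d : ℕ → P.Face) : Prop :=
  Set.EqOn d c {i + 1}ᶜ ∧ d (i + 1) ≠ c (i + 1)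

namespace IsAdjacentAt

variable {c d e : ℕ → P.Face} {i : ℕ}

theorem symm (h : IsAdjacentAt i c d) : IsAdjacentAt i d c := ⟨h.1.symm, h.2.symm⟩

theorem smul (h : IsAdjacentAt i c d) (g : P.Face ≃o P.Face) :
    IsAdjacentAt i (g • c) (g • d) :=
  ⟨fun _ hk => congrArg (g • ·) (h.1 hk), (MulAction.injective g).ne h.2⟩

theorem apply_left (h : IsAdjacentAt i c d) : d i = c i := h.1 (by simp)

theorem apply_right (h : IsAdjacentAt i c d) : d (i + 2) = c (i + 2) := h.1 (by simp)

theorem apply_mem_Ioo (h : IsAdjacentAt i c d) (hd : P.IsFlagSeq d) (hi : i < n) :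
    d (i + 1) ∈ Set.Ioo (c i) (c (i + 2)) := by
  rw [← h.apply_left, ← h.apply_right]
  exact hd.apply_add_one_mem_Ioo hi

theorem eq (hcd : IsAdjacentAt i c d) (hce : IsAdjacentAt i c e) (hc : P.IsFlagSeq c)
    (hd : P.IsFlagSeq d) (he : P.IsFlagSeq e) (hi : i < n) : d = e := by
  funext k
  by_cases hk : k = i + 1
  · subst hk
    exact eq_of_mem_Ioo_of_ne (hc.rank_apply_add_two hi) (hc.apply_add_one_mem_Ioo hi)
      (hcd.apply_mem_Ioo hd hi) (hce.apply_mem_Ioo he hi) hcd.2 hce.2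
  · rw [hcd.1 hk, hce.1 hk]

theorem smul_apply_eq (h : IsAdjacentAt i c d) (hc : P.IsFlagSeq c) (hd : P.IsFlagSeq d)
    (hi : i < n) {g : P.Face ≃o P.Face} (hleft : g • c i = c i)
    (hmid : g • c (i + 1) = c (i + 1)) (hright : g • c (i + 2) = c (i + 2)) :
    g • d (i + 1) = d (i + 1) := by
  have hmem := (h.smul g).apply_mem_Ioo (hd.smul g) hi
  simp only [Pi.smul_apply, hleft, hright] at hmem
  exact eq_of_mem_Ioo_of_ne (hc.rank_apply_add_two hi) (hc.apply_add_one_mem_Ioo hi) hmem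
    (h.apply_mem_Ioo hd hi) (fun he => h.2 (MulAction.injective g (he.trans hmid.symm))) h.2

end IsAdjacentAt

theorem Ioc_add_one_eq_singleton (i : ℕ) : Set.Ioc i (i + 1) = {i + 1} := by
  ext k
  rw [Set.mem_Ioc, Set.mem_singleton_iff]
  omega

theorem IsFlagSeq.exists_isAdjacentAt {c : ℕ → P.Face} (hc : P.IsFlagSeq c) {i : ℕ} (hi : i < n) :
    ∃ d, P.IsFlagSeq d ∧ IsAdjacentAt i c d := by
  obtain ⟨y, hy, hne⟩ := exists_mem_Ioo_ne (hc.rank_apply_add_two hi)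
    (hc.apply_lt_apply (by omega) (by omega)) (c (i + 1))
  obtain ⟨d, hd, heq, hyd, -⟩ := hc.exists_eqOn_compl_Ioc hy hy (Or.inl le_rfl)
  have hlow := P.rank_strictMono _ _ hy.1
  have hhigh := P.rank_strictMono _ _ hy.2
  have hdy : d (i + 1) = y := hd.eq_of_rank_eq hyd (by
    rw [hc.rank_eq] at hlow hhigh
    rw [hd.rank_eq]
    omega)
  exact ⟨d, hd, Ioc_add_one_eq_singleton i ▸ heq, hdy ▸ hne⟩

end FlagSequences

section DistinguishedGenerators

variable {n : ℕ} {P : AbstractPolytope n}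

/-- `ρ₀, …, ρₙ₋₁` are the distinguished generators of the automorphism group of a regular polytope
with respect to the base flag `c`: the automorphism `ρᵢ` maps `c` to its `i`-adjacent flag. -/
structure IsDistinguished (c : ℕ → P.Face) (ρ : ℕ → (P.Face ≃o P.Face)) : Prop where
  isFlagSeq : P.IsFlagSeq c
  isAdjacentAt : ∀ i < n, IsAdjacentAt i c (ρ i • c)

theorem exists_isDistinguished (hreg : P.IsRegular) :
    ∃ c : ℕ → P.Face, ∃ ρ, IsDistinguished c ρ := by
  obtain ⟨c, hc, -⟩ := exists_isFlagSeq_mem_range P.bot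
  have hex (i : ℕ) : ∃ g : P.Face ≃o P.Face, i < n → IsAdjacentAt i c (g • c) := by
    by_cases hi : i < n
    · obtain ⟨d, hd, hcd⟩ := hc.exists_isAdjacentAt hi
      obtain ⟨g, rfl⟩ := hc.exists_smul_eq hreg hd
      exact ⟨g, fun _ => hcd⟩
    · exact ⟨1, fun h => absurd h hi⟩
  choose ρ hρ using hex
  exact ⟨c, ρ, hc, hρ⟩

/-- The parabolic subgroup `⟨ρᵢ, …, ρⱼ₋₁⟩` is transitive on the flags which agree with `c` outside
the ranks `i, …, j - 1`; these are the flags of the section `c (j + 1) / c i`. -/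
def IsFlagTransitive (c : ℕ → P.Face) (ρ : ℕ → (P.Face ≃o P.Face)) (i j : ℕ) : Prop :=
  ∀ d, P.IsFlagSeq d → Set.EqOn d c (Set.Ioc i j)ᶜ → ∃ g ∈ parabolic ρ i j, g • c = d

theorem isFlagTransitive_self (c : ℕ → P.Face) (ρ : ℕ → (P.Face ≃o P.Face)) (i : ℕ) :
    IsFlagTransitive c ρ i i := fun d _ hdc =>
  ⟨1, one_mem _, funext fun k => by rw [one_smul, hdc (by simp)]⟩

namespace IsDistinguished

variable {c : ℕ → P.Face} {ρ : ℕ → (P.Face ≃o P.Face)} {i j k l : ℕ}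

theorem smul_apply (h : IsDistinguished c ρ) (hi : i < n) (hk : k ≠ i + 1) : ρ i • c k = c k :=
  (h.isAdjacentAt i hi).1 hk

theorem eqOn_of_mem_parabolic (h : IsDistinguished c ρ) (hj : j ≤ n) {g : P.Face ≃o P.Face}
    (hg : g ∈ parabolic ρ i j) : Set.EqOn (g • c) c (Set.Ioc i j)ᶜ := fun k hk => by
  have hle : parabolic ρ i j ≤ MulAction.stabilizer (P.Face ≃o P.Face) (c k) :=
    parabolic.le_iff.2 fun l hil hlj => h.smul_apply (by omega) fun he => hk ⟨by omega, by omega⟩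
  exact hle hg

theorem isFlagTransitive_add_one (h : IsDistinguished c ρ) (hi : i < n) :
    IsFlagTransitive c ρ i (i + 1) := fun d hd hdc => by
  rw [Ioc_add_one_eq_singleton] at hdc
  by_cases he : d (i + 1) = c (i + 1)
  · refine ⟨1, one_mem _, funext fun k => ?_⟩
    by_cases hk : k = i + 1
    · rw [one_smul, hk, he]
    · rw [one_smul, hdc hk]
  · exact ⟨ρ i, parabolic.generator_mem le_rfl i.lt_succ_self,
      (h.isAdjacentAt i hi).eq ⟨hdc, he⟩ h.isFlagSeq (h.isFlagSeq.smul _) hd hi⟩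

theorem exists_smul_eq_of_apply_eq (h : IsDistinguished c ρ) (hj : j ≤ n) (hil : i ≤ l)
    (hlj : l < j) (hlow : IsFlagTransitive c ρ i l) (hhigh : IsFlagTransitive c ρ (l + 1) j)
    {d : ℕ → P.Face} (hd : P.IsFlagSeq d) (hdc : Set.EqOn d c (Set.Ioc i j)ᶜ)
    (hl : d (l + 1) = c (l + 1)) : ∃ g ∈ parabolic ρ i j, g • c = d := by
  obtain ⟨g, hg, hgc⟩ := hlow _ (h.isFlagSeq.piecewise hd hl) fun k hk => by
    simp only [Set.mem_compl_iff, Set.mem_Ioc] at hk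
    by_cases hkl : k ≤ l + 1
    · rw [Set.piecewise_eq_of_mem _ _ _ (Set.mem_Iic.2 hkl)]
      rcases eq_or_ne k (l + 1) with rfl | hne
      · exact hl
      · exact hdc (by simp only [Set.mem_compl_iff, Set.mem_Ioc]; omega)
    · exact Set.piecewise_eq_of_notMem _ _ _ (mt Set.mem_Iic.1 hkl)
  obtain ⟨u, hu, huc⟩ := hhigh (g⁻¹ • d) (hd.smul _) fun k hk => by
    simp only [Set.mem_compl_iff, Set.mem_Ioc] at hk
    rw [Pi.smul_apply, inv_smul_eq_iff]
    by_cases hkl : k ≤ l + 1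
    · rw [← Pi.smul_apply, hgc, Set.piecewise_eq_of_mem _ _ _ (Set.mem_Iic.2 hkl)]
    · rw [← Pi.smul_apply, h.eqOn_of_mem_parabolic (by omega) hg
        (by simp only [Set.mem_compl_iff, Set.mem_Ioc]; omega)]
      exact hdc (by simp only [Set.mem_compl_iff, Set.mem_Ioc]; omega)
  exact ⟨g * u, mul_mem (parabolic.mono le_rfl hlj.le hg) (parabolic.mono (by omega) le_rfl hu),
    by rw [mul_smul, huc, smul_inv_smul]⟩

theorem exists_smul_eq_of_incident (h : IsDistinguished c ρ) (hj : j ≤ n)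
    (hlow : ∀ l, i ≤ l → l < j → IsFlagTransitive c ρ i l)
    (hhigh : ∀ l, i ≤ l → l < j → IsFlagTransitive c ρ (l + 1) j)
    {x y : P.Face} (hx : x ∈ Set.Ioo (c i) (c (j + 1))) (hy : y ∈ Set.Ioo (c i) (c (j + 1)))
    (hxy : P.Incident x y)
    (htrans : ∀ d, P.IsFlagSeq d → Set.EqOn d c (Set.Ioc i j)ᶜ → x ∈ Set.range d →
      ∃ g ∈ parabolic ρ i j, g • c = d)
    {d : ℕ → P.Face} (hd : P.IsFlagSeq d) (hdc : Set.EqOn d c (Set.Ioc i j)ᶜ)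
    (hyd : y ∈ Set.range d) : ∃ g ∈ parabolic ρ i j, g • c = d := by
  obtain ⟨e, he, hec, hxe, hye⟩ := h.isFlagSeq.exists_eqOn_compl_Ioc hx hy hxy
  obtain ⟨g, hg, rfl⟩ := htrans e he hec hxe
  obtain ⟨l, hl⟩ : ∃ l, P.rank y = P.rank (c (l + 1)) ∧ i ≤ l ∧ l < j := by
    obtain ⟨k, hk⟩ := h.isFlagSeq.exists_rank_apply_eq y
    have hlt := P.rank_strictMono _ _ hy.1
    have hgt := P.rank_strictMono _ _ hy.2
    rw [hk, h.isFlagSeq.rank_eq, h.isFlagSeq.rank_eq] at hlt hgt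
    exact ⟨k - 1, by rw [hk, Nat.sub_add_cancel (by omega)], by omega, by omega⟩
  have hgl : d (l + 1) = g • c (l + 1) := by
    rw [hd.eq_of_rank_eq hyd (by rw [hl.1, h.isFlagSeq.rank_eq, hd.rank_eq]), ← Pi.smul_apply,
      he.eq_of_rank_eq hye (by rw [hl.1, Pi.smul_apply, rank_smul])]
  obtain ⟨u, hu, huc⟩ := h.exists_smul_eq_of_apply_eq hj hl.2.1 hl.2.2 (hlow l hl.2.1 hl.2.2)
    (hhigh l hl.2.1 hl.2.2) (hd.smul g⁻¹)
    (fun k hk => by rw [Pi.smul_apply, inv_smul_eq_iff]; exact (hdc hk).trans (hec hk).symm)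
    (by rw [Pi.smul_apply, inv_smul_eq_iff, hgl])
  exact ⟨g * u, mul_mem hg hu, by rw [mul_smul, huc, smul_inv_smul]⟩

theorem isFlagTransitive_of_forall_lt (h : IsDistinguished c ρ) (hij : i + 2 ≤ j) (hj : j ≤ n)
    (hlow : ∀ l, i ≤ l → l < j → IsFlagTransitive c ρ i l)
    (hhigh : ∀ l, i ≤ l → l < j → IsFlagTransitive c ρ (l + 1) j) :
    IsFlagTransitive c ρ i j := fun d hd hdc => by
  have hc := h.isFlagSeq
  have hconn := P.strongly_connected (c i) (c (j + 1)) (hc.apply_lt_apply (by omega) (by omega))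
    (by rw [hc.rank_eq, hc.rank_eq]; omega) (c (i + 1)) (d (i + 1))
    (hc.apply_lt_apply (by omega) (by omega)) (hc.apply_lt_apply (by omega) (by omega))
    (by rw [← hdc (x := i) (by simp)]; exact hd.apply_lt_apply (by omega) (by omega))
    (by rw [← hdc (x := j + 1) (by simp)]; exact hd.apply_lt_apply (by omega) (by omega))
  suffices hall : ∀ e, P.IsFlagSeq e → Set.EqOn e c (Set.Ioc i j)ᶜ → d (i + 1) ∈ Set.range e →
      ∃ g ∈ parabolic ρ i j, g • c = e from hall d hd hdc ⟨i + 1, rfl⟩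
  generalize d (i + 1) = x at hconn ⊢
  induction hconn with
  | refl =>
    intro e he hec hmem
    exact h.exists_smul_eq_of_apply_eq hj le_rfl (by omega) (hlow i le_rfl (by omega))
      (hhigh i le_rfl (by omega)) he hec
      (he.eq_of_rank_eq hmem (by rw [hc.rank_eq, he.rank_eq]))
  | tail _ hstep ih =>
    intro e he hec hmem
    obtain ⟨hx₁, hx₂, hy₁, hy₂, hxy⟩ := hstep
    exact h.exists_smul_eq_of_incident hj hlow hhigh ⟨hx₁, hx₂⟩ ⟨hy₁, hy₂⟩ hxy ih he hec hmem

theorem isFlagTransitive (h : IsDistinguished c ρ) (hij : i ≤ j) (hj : j ≤ n) :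
    IsFlagTransitive c ρ i j := by
  induction hm : j - i using Nat.strong_induction_on generalizing i j with
  | _ m ih =>
    rcases hij.eq_or_lt with rfl | hlt
    · exact isFlagTransitive_self c ρ i
    rcases (Nat.succ_le_of_lt hlt).eq_or_lt with rfl | hlt'
    · exact h.isFlagTransitive_add_one (by omega)
    exact h.isFlagTransitive_of_forall_lt hlt' hj
      (fun l hil hlj => ih (l - i) (by omega) hil (by omega) rfl)
      (fun l hil hlj => ih (j - (l + 1)) (by omega) hlj hj rfl)

theorem eqOn_compl_Ioc (h : IsDistinguished c ρ) {d : ℕ → P.Face} (hd : P.IsFlagSeq d) :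
    Set.EqOn d c (Set.Ioc 0 n)ᶜ := fun k hk => by
  rcases Nat.eq_zero_or_pos k with rfl | hpos
  · rw [hd.apply_zero, h.isFlagSeq.apply_zero]
  · have hlt : n < k := not_le.1 fun hle => hk ⟨hpos, hle⟩
    rw [hd.apply_eq_top hlt, h.isFlagSeq.apply_eq_top hlt]

theorem exists_mem_parabolic_smul_eq (h : IsDistinguished c ρ) {d : ℕ → P.Face}
    (hd : P.IsFlagSeq d) : ∃ g ∈ parabolic ρ 0 n, g • c = d :=
  h.isFlagTransitive n.zero_le le_rfl d hd (h.eqOn_compl_Ioc hd)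

theorem smul_smul_eq (h : IsDistinguished c ρ) {g : P.Face ≃o P.Face} (hg : g • c = c)
    {u : P.Face ≃o P.Face} (hu : u ∈ parabolic ρ 0 n) : g • u • c = u • c := by
  have hstep {i : ℕ} {d e : ℕ → P.Face} (hd : P.IsFlagSeq d) (he : P.IsFlagSeq e) (hi : i < n)
      (hde : IsAdjacentAt i d e) (hgd : g • d = d) : g • e = e :=
    IsAdjacentAt.eq (by simpa only [hgd] using hde.smul g) hde hd (he.smul g) he hi
  induction hu using Subgroup.closure_induction_right with
  | one => rw [one_smul, hg]
  | mul_right x _ y hy ih =>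
    obtain ⟨i, ⟨-, hi⟩, rfl⟩ := hy
    rw [mul_smul]
    exact hstep (h.isFlagSeq.smul _) ((h.isFlagSeq.smul _).smul _) hi
      ((h.isAdjacentAt i hi).smul x) ih
  | mul_inv_cancel x _ y hy ih =>
    obtain ⟨i, ⟨-, hi⟩, rfl⟩ := hy
    have hadj := (h.isAdjacentAt i hi).symm.smul (ρ i)⁻¹
    rw [inv_smul_smul] at hadj
    rw [mul_smul]
    exact hstep (h.isFlagSeq.smul _) ((h.isFlagSeq.smul _).smul _) hi (hadj.smul x) ih

theorem eq_one_of_smul_eq (h : IsDistinguished c ρ) {g : P.Face ≃o P.Face} (hg : g • c = c) :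
    g = 1 := by
  refine RelIso.ext fun F => ?_
  obtain ⟨d, hd, k, rfl⟩ := exists_isFlagSeq_mem_range F
  obtain ⟨u, hu, rfl⟩ := h.exists_mem_parabolic_smul_eq hd
  exact congrFun (h.smul_smul_eq hg hu) k

theorem eq_of_smul_eq (h : IsDistinguished c ρ) {g u : P.Face ≃o P.Face} (hgu : g • c = u • c) :
    g = u :=
  (inv_mul_eq_one.1 (h.eq_one_of_smul_eq (by rw [mul_smul, hgu, inv_smul_smul]))).symm

theorem mem_parabolic_iff (h : IsDistinguished c ρ) (hj : j ≤ n) {g : P.Face ≃o P.Face} :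
    g ∈ parabolic ρ i j ↔ Set.EqOn (g • c) c (Set.Ioc i j)ᶜ := by
  refine ⟨h.eqOn_of_mem_parabolic hj, fun hg => ?_⟩
  rcases le_total i j with hij | hji
  · obtain ⟨u, hu, huc⟩ := h.isFlagTransitive hij hj _ (h.isFlagSeq.smul g) hg
    rwa [← h.eq_of_smul_eq huc]
  · rw [h.eq_one_of_smul_eq (funext fun k => hg (by simp [Set.Ioc_eq_empty_of_le hji]))]
    exact one_mem _

theorem mul_self (h : IsDistinguished c ρ) (hi : i < n) : ρ i * ρ i = 1 := by
  have hc := h.isFlagSeq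
  have hadj := h.isAdjacentAt i hi
  refine h.eq_one_of_smul_eq ?_
  rw [mul_smul]
  exact (hadj.smul (ρ i)).eq hadj.symm (hc.smul _) ((hc.smul _).smul _) hc hi

theorem commute (h : IsDistinguished c ρ) (hij : i + 2 ≤ j) (hj : j < n) :
    Commute (ρ i) (ρ j) := by
  have hi : i < n := by omega
  have hc := h.isFlagSeq
  refine h.eq_of_smul_eq (funext fun k => ?_)
  simp only [mul_smul, Pi.smul_apply]
  rcases eq_or_ne k (i + 1) with rfl | hki
  · have hfix := (h.isAdjacentAt i hi).smul_apply_eq hc (hc.smul _) hi (g := ρ j)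
      (h.smul_apply hj (by omega)) (h.smul_apply hj (by omega)) (h.smul_apply hj (by omega))
    rw [Pi.smul_apply] at hfix
    rw [h.smul_apply hj (by omega), hfix]
  rw [h.smul_apply hi hki]
  rcases eq_or_ne k (j + 1) with rfl | hkj
  · exact (h.isAdjacentAt j hj).smul_apply_eq hc (hc.smul _) hj
      (h.smul_apply hi (by omega)) (h.smul_apply hi (by omega)) (h.smul_apply hi (by omega))
  · rw [h.smul_apply hj hkj, h.smul_apply hi hki]

theorem parabolic_inf (h : IsDistinguished c ρ) (hj : j ≤ n) (hl : l ≤ n) :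
    parabolic ρ i j ⊓ parabolic ρ k l = parabolic ρ (max i k) (min j l) := by
  ext g
  rw [Subgroup.mem_inf, h.mem_parabolic_iff hj, h.mem_parabolic_iff hl,
    h.mem_parabolic_iff (min_le_left j l |>.trans hj), ← Set.eqOn_union, ← Set.compl_inter,
    Set.Ioc_inter_Ioc]

theorem parabolic_eq_top (h : IsDistinguished c ρ) : parabolic ρ 0 n = ⊤ :=
  (Subgroup.eq_top_iff' _).2 fun g =>
    (h.mem_parabolic_iff le_rfl).2 (h.eqOn_compl_Ioc (h.isFlagSeq.smul g))

theorem isFlat_of_isFlatSection (h : IsDistinguished c ρ) (hn : 0 < n)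
    (hflat : IsFlatSection ρ 0 n) : P.IsFlat := fun F E hF hE => by
  have hc := h.isFlagSeq
  obtain ⟨d, hd, hFd⟩ := exists_isFlagSeq_mem_range F
  obtain ⟨e, he, hEe⟩ := exists_isFlagSeq_mem_range E
  obtain ⟨u, -, rfl⟩ := h.exists_mem_parabolic_smul_eq hd
  obtain ⟨w, -, rfl⟩ := h.exists_mem_parabolic_smul_eq he
  have huF : u • c 1 = F := hd.eq_of_rank_eq hFd (by rw [hd.rank_eq, hF]; omega)
  have hwE : w • c n = E := he.eq_of_rank_eq hEe (by rw [he.rank_eq, hE]; omega)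
  obtain ⟨x, hx, y, hy, hxy⟩ := hflat (a := w⁻¹ * u) (h.parabolic_eq_top ▸ Subgroup.mem_top _)
  have hx : x • c n = c n := h.eqOn_of_mem_parabolic (by omega) hx
    (by simp only [Set.mem_compl_iff, Set.mem_Ioc]; omega)
  have hy : y • c 1 = c 1 := h.eqOn_of_mem_parabolic le_rfl hy (by simp)
  have hle : x • c 1 ≤ x • c n := x.monotone (hc.monotone hn)
  refine Or.inl ?_
  rw [← huF, ← hwE, ← mul_inv_cancel_left w u, ← hxy, mul_smul, mul_smul, hy]
  exact w.monotone (hle.trans_eq hx)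

theorem isNonflatStringCGroup (h : IsDistinguished c ρ) (hn : 0 < n) (hnonflat : ¬ P.IsFlat) :
    IsNonflatStringCGroup ρ n where
  mul_self _ hi := h.mul_self hi
  commute_of_add_two_le _ _ hij hj := h.commute hij hj
  parabolic_inf _ _ _ _ hj hl := h.parabolic_inf hj hl
  parabolic_eq_top := h.parabolic_eq_top
  not_isFlatSection_zero hflat := hnonflat (h.isFlat_of_isFlatSection hn hflat)

theorem numFlags_eq_natCard (h : IsDistinguished c ρ) (hreg : P.IsRegular) :
    P.numFlags = Nat.card (P.Face ≃o P.Face) := by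
  have hc := h.isFlagSeq
  refine (Nat.card_eq_of_bijective (fun g => (hc.smul g).toFlag)
    ⟨fun g u hgu => ?_, fun Φ => ?_⟩).symm
  · have hrange : Set.range (g • c) = Set.range (u • c) :=
      congrArg (SetLike.coe (A := Flag P.Face)) hgu
    exact h.eq_of_smul_eq ((hc.smul g).eq_of_range_subset (hc.smul u) hrange.le)
  · obtain ⟨d, hd, hrange⟩ := exists_isFlagSeq_range_eq Φ
    obtain ⟨g, rfl⟩ := hc.exists_smul_eq hreg hd
    exact ⟨g, SetLike.coe_injective hrange⟩

end IsDistinguished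

end DistinguishedGenerators

end AbstractPolytope

/-- Let `n ≥ 5` and let `P` be a non-flat regular `n`-polytope
with strictly more than `4 * (n+1)!` flags. Then `P` has at least
`(16/3) * (n+1)!` flags (stated in the equivalent integral form
`16 * (n+1)! ≤ 3 * numFlags`). -/
theorem fourth_smallest_nonflat_regular
    (n : ℕ) (hn : 5 ≤ n) (P : AbstractPolytope n) (hreg : P.IsRegular)
    (hnonflat : ¬ P.IsFlat)
    (hbig : 4 * Nat.factorial (n + 1) < P.numFlags) :
    16 * Nat.factorial (n + 1) ≤ 3 * P.numFlags := by
  obtain ⟨c, ρ, hρ⟩ := AbstractPolytope.exists_isDistinguished hreg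
  rw [hρ.numFlags_eq_natCard hreg] at hbig ⊢
  have : Finite (P.Face ≃o P.Face) := Nat.finite_of_card_ne_zero (by omega)
  exact (hρ.isNonflatStringCGroup (by omega) hnonflat).sixteen_mul_factorial_le hn hbig
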